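/- Let d > 2 be an integer and c₀ ∈ (0,1]. There exist δ_stab ∈ (0,1/10] and C_stab > 0, depending only on (d, c₀), such that for every admissible kernel J on ℤ^d with constant c₀ and every G ∈ 𝒢 with (J,G) satisfying Assumption G, for every β < β(δ_stab) and every β' ≤ β: ∑_{x ∈ ℤ^d : |x| ≤ ξ(β')} F_β(x) ≤ C_stab·χ(β'); equivalently, P_β[|X_1| ≤ ξ(β')] ≤ C_stab·χ(β')/χ(β). -/

import Mathlib

open scoped ENNReal

noncomputable section

namespace Blackbox

/-- Supremum norm of a lattice point. -/
def supNorm {d : ℕ} (x : Fin d → ℤ) : ℝ :=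
  ((Finset.univ.sup fun i => (x i).natAbs : ℕ) : ℝ)

/-- Squared Euclidean norm of a lattice point. -/
def sqNorm {d : ℕ} (x : Fin d → ℤ) : ℝ :=
  ∑ i, ((x i : ℝ)) ^ 2

/-- Invariance under coordinate permutations and sign flips of individual coordinates. -/
def IsSymmFun {d : ℕ} {α : Type*} (f : (Fin d → ℤ) → α) : Prop :=
  ∀ (π : Equiv.Perm (Fin d)) (e : Fin d → Bool) (x : Fin d → ℤ),
    f (fun i => (if e i then -1 else 1) * x (π i)) = f x

/-- First coordinate (dot product with `e₁`). -/
def e1 {d : ℕ} {α : Type*} [Zero α] (y : Fin d → α) : α :=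
  if h : 0 < d then y ⟨0, h⟩ else 0

/-- An admissible kernel on `ℤ^d` with constant `c₀`. -/
structure AdmissibleKernel (d : ℕ) (c₀ : ℝ) where
  J : (Fin d → ℤ) → ℝ
  nonneg : ∀ x, 0 ≤ J x
  zero_at_zero : J 0 = 0
  summable : Summable J
  norm_one : ∑' x, J x = 1
  symm : IsSymmFun J
  R : ℝ
  R_ge_one : 1 ≤ R
  range_le : ∀ x, 0 < J x → supNorm x ≤ R
  range_attained : ∃ x, 0 < J x ∧ supNorm x = R
  summable_sq : Summable fun x => sqNorm x * J x
  sigma_lower : c₀ * R ≤ Real.sqrt (∑' x, sqNorm x * J x)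
  J_upper : ∀ x, J x ≤ c₀⁻¹ / R ^ d

/-- `σ_J`, the square root of the variance of the kernel. -/
def AdmissibleKernel.sigma {d : ℕ} {c₀ : ℝ} (K : AdmissibleKernel d c₀) : ℝ :=
  Real.sqrt (∑' x, sqNorm x * K.J x)

/-- A family `G ∈ 𝒢` together with an admissible kernel `J` such that `(J,G)` satisfies
Assumption G (with error-term family `H`). -/
structure Model (d : ℕ) (c₀ : ℝ) where
  K : AdmissibleKernel d c₀
  G : ℝ → (Fin d → ℤ) → ℝ≥0∞
  βc : ℝ≥0∞
  βc_pos : 0 < βc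
  init : ∀ x, G 0 x = if x = 0 then 1 else 0
  G' : ℝ → (Fin d → ℤ) → ℝ
  mono : ∀ (x : Fin d → ℤ) ⦃β₁ β₂ : ℝ⦄, 0 ≤ β₁ → β₁ ≤ β₂ →
    ENNReal.ofReal β₂ ≤ βc → G β₁ x ≤ G β₂ x
  deriv : ∀ (x : Fin d → ℤ) ⦃β : ℝ⦄, 0 ≤ β → ENNReal.ofReal β < βc →
    HasDerivWithinAt (fun t => (G t x).toReal) (G' β x) (Set.Ici 0) β
  symm : ∀ β, IsSymmFun (G β)
  expDecay : ∀ ⦃β : ℝ⦄, 0 ≤ β → ENNReal.ofReal β < βc →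
    ∃ C > (0:ℝ), ∃ c > (0:ℝ), ∀ x, G β x ≤ ENNReal.ofReal (C * Real.exp (-c * supNorm x))
  limit : βc ≠ ⊤ → ∀ x, G βc.toReal x = ⨆ β ∈ Set.Ico (0 : ℝ) βc.toReal, G β x
  I1 : ∀ ⦃β' β : ℝ⦄, 0 ≤ β' → β' ≤ β → ENNReal.ofReal β < βc →
    ∀ x, G β x ≤ G β' x + ENNReal.ofReal (β - β') *
      ∑' p : (Fin d → ℤ) × (Fin d → ℤ),
        G β' p.1 * ENNReal.ofReal (K.J p.2) * G β (x - p.1 - p.2)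
  H : ℝ → (Fin d → ℤ) → ℝ
  H_nonneg : ∀ β x, 0 ≤ H β x
  H_zero : ∀ x, H 0 x = 0
  H_symm : ∀ β x, H β (-x) = H β x
  H_cont : ∀ x, ContinuousOn (fun β => H β x)
    {β : ℝ | 0 ≤ β ∧ ENNReal.ofReal β < βc}
  H_expDecay : ∀ ⦃β : ℝ⦄, 0 ≤ β → ENNReal.ofReal β < βc →
    ∃ C > (0:ℝ), ∃ c > (0:ℝ), ∀ x, H β x ≤ C * Real.exp (-c * supNorm x)
  I2 : ∀ ⦃β : ℝ⦄, 0 ≤ β → ENNReal.ofReal β < βc → ∀ x,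
    (∑' p : (Fin d → ℤ) × (Fin d → ℤ),
      (G β p.1).toReal * (K.J p.2 - H β p.2) * (G β (x - p.1 - p.2)).toReal)
      ≤ G' β x

namespace Model

variable {d : ℕ} {c₀ : ℝ}

def sigma (M : Model d c₀) : ℝ := M.K.sigma

/-- `F_β = J * G_β`. -/
def F (M : Model d c₀) (β : ℝ) (x : Fin d → ℤ) : ℝ≥0∞ :=
  ∑' y, ENNReal.ofReal (M.K.J y) * M.G β (x - y)

/-- The susceptibility `χ(β)`. -/
def chi (M : Model d c₀) (β : ℝ) : ℝ≥0∞ := ∑' x, M.G β x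

/-- `ξ(β)²`. -/
def xiSq (M : Model d c₀) (β : ℝ) : ℝ≥0∞ :=
  (∑' x, ENNReal.ofReal (sqNorm x) * M.F β x) / M.chi β

/-- The correlation length of order two, `ξ(β)`. -/
def xi (M : Model d c₀) (β : ℝ) : ℝ := Real.sqrt (M.xiSq β).toReal

/-- The error term `E(β)`. -/
def E (M : Model d c₀) (β : ℝ) : ℝ≥0∞ :=
  ⨆ t ∈ Set.Icc (0 : ℝ) β,
    (ENNReal.ofReal (∑' x, M.H t x) +
      ENNReal.ofReal (∑' x, sqNorm x * M.H t x) / M.xiSq t)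

/-- `β(δ)`. -/
def betaOf (M : Model d c₀) (δ : ℝ) : ℝ :=
  sSup {β : ℝ | 0 ≤ β ∧ ENNReal.ofReal β < M.βc ∧ M.E β < ENNReal.ofReal δ}

/-- One-step distribution of the effective random walk at parameter `β`. -/
def effStep (M : Model d c₀) (β : ℝ) (y : Fin d → ℤ) : ℝ≥0∞ :=
  M.F β y / M.chi β

/-- `k`-step distribution of the effective random walk at parameter `β`. -/
def effIter (M : Model d c₀) (β : ℝ) : ℕ → (Fin d → ℤ) → ℝ≥0∞
  | 0 => fun x => if x = 0 then 1 else 0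
  | n + 1 => fun x => ∑' y, M.effStep β y * M.effIter β n (x - y)

/-- Moment generating function `M_β(s)` of the first coordinate of one step of the
effective random walk. -/
def Mgf (M : Model d c₀) (β s : ℝ) : ℝ≥0∞ :=
  ∑' y : Fin d → ℤ, M.effStep β y * ENNReal.ofReal (Real.exp (s / M.xi β * ((e1 y : ℤ) : ℝ)))

end Model

end Blackbox
open Blackbox

/-!
For `s ≤ t` let `p` be the effective step law at `s`. Assumption (I.1) gives the renewal inequality
`F_t ≤ χ_s p + (t - s) χ_s p * F_t`, and iterating it `T` times bounds the pairing of `F_t` with a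
test function by that of `F_t` with the average of the test function over `T` steps of the walk.

While the error is below `δ`, (I.1) and (I.2) make `χ` and the second and fourth moments `V`, `U`
of `F` satisfy a closed system of differential inequalities. It yields `(t - s) χ_s ≤ 1 / (1 - δ)`,
growth of `ξ² = V / χ` at least like `χ ^ (1 - 2 δ)`, and a uniform bound on the kurtosis `χ U / V²`
of the effective steps. Under the kurtosis bound alone, `T` steps of the walk contract the smoothed
ball indicator `w_X = X² / (X² + |x|⁴)`: `P ^ T w_X ≤ η w_{TX}`, where `η T` is as small as we
please because the walk is in a ball of radius `√X` after `T` steps with probability at most of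
order `T ^ (-d / 2)` and `d > 2`.

Let `r` be the scale at which `χ_r = 2 T χ_s`, so that `ξ_r² ≥ T ξ_s²`. Then
`⟨F_t, w_{ξ_s²}⟩ ≤ 2 T χ_s + 2 η ⟨F_t, w_{ξ_r²}⟩`, and as `2 η · 4 T χ_r ≤ 2 T χ_s`, the bound
`⟨F_t, w_{ξ_s²}⟩ ≤ 4 T χ_s` passes from the scale `r` to the scale `s`.
-/

namespace Blackbox

lemma tsum_mul_le_of_le_add_mul {α : Type*} {f a b : α → ℝ≥0∞} {c : ℝ≥0∞}
    (h : ∀ x, f x ≤ a x + c * b x) (w : α → ℝ≥0∞) :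
    ∑' x, f x * w x ≤ (∑' x, a x * w x) + c * ∑' x, b x * w x := by
  rw [← ENNReal.tsum_mul_left, ← ENNReal.tsum_add]
  refine ENNReal.tsum_le_tsum fun x => (mul_le_mul_left (h x) (w x)).trans_eq ?_
  ring

lemma hasSum_toReal {α : Type*} {f : α → ℝ≥0∞} (hf : ∑' x, f x ≠ ∞) :
    HasSum (fun x => (f x).toReal) (∑' x, f x).toReal := by
  rw [ENNReal.tsum_toReal_eq fun x => ENNReal.ne_top_of_tsum_ne_top hf x]
  exact ENNReal.hasSum_toReal hf

lemma toReal_le_add_mul {A B C : ℝ≥0∞} {r : ℝ} (h : A ≤ B + ENNReal.ofReal r * C)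
    (hr : 0 ≤ r) (hB : B ≠ ∞) (hC : C ≠ ∞) : A.toReal ≤ B.toReal + r * C.toReal := by
  have hrC : ENNReal.ofReal r * C ≠ ∞ := ENNReal.mul_ne_top ENNReal.ofReal_ne_top hC
  simpa only [ENNReal.toReal_add hB hrC, ENNReal.toReal_mul, ENNReal.toReal_ofReal hr] using
    ENNReal.toReal_mono (ENNReal.add_ne_top.2 ⟨hB, hrC⟩) h

section StepOperator

variable {V : Type*} [AddCommGroup V] {f f' g u u' : V → ℝ≥0∞}

/-- The transition operator of the random walk with (not necessarily normalised) step weights `f`: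
`stepOp f u x` is the `f`-expectation of the observable `u` one step after `x`. -/
def stepOp (f u : V → ℝ≥0∞) (x : V) : ℝ≥0∞ := ∑' y, f y * u (x + y)

/-- The convolution `f * g`, with values in `ℝ≥0∞` so that no summability is needed. -/
def conv (f g : V → ℝ≥0∞) (x : V) : ℝ≥0∞ := ∑' y, f y * g (x - y)

lemma stepOp_mono (hf : f ≤ f') (hu : u ≤ u') : stepOp f u ≤ stepOp f' u' :=
  fun _ => ENNReal.tsum_le_tsum fun y => mul_le_mul' (hf y) (hu _)

lemma stepOp_comm (f g u : V → ℝ≥0∞) : stepOp f (stepOp g u) = stepOp g (stepOp f u) := by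
  funext x
  simp only [stepOp, ← ENNReal.tsum_mul_left]
  rw [ENNReal.tsum_comm]
  refine tsum_congr fun y => tsum_congr fun z => ?_
  rw [add_right_comm]
  ring

lemma stepOp_const (f : V → ℝ≥0∞) (c : ℝ≥0∞) :
    stepOp f (fun _ => c) = fun _ => (∑' y, f y) * c :=
  funext fun _ => ENNReal.tsum_mul_right

lemma stepOp_add (f u v : V → ℝ≥0∞) :
    stepOp f (fun y => u y + v y) = fun x => stepOp f u x + stepOp f v x := by
  funext x
  simp only [stepOp, mul_add, ENNReal.tsum_add]

lemma stepOp_const_mul (f u : V → ℝ≥0∞) (c : ℝ≥0∞) :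
    stepOp f (fun y => c * u y) = fun x => c * stepOp f u x := by
  funext x
  simp only [stepOp, mul_left_comm _ c, ENNReal.tsum_mul_left]

lemma stepOp_conv (f g u : V → ℝ≥0∞) : stepOp (conv f g) u = stepOp f (stepOp g u) := by
  funext x
  simp only [stepOp, conv, ← ENNReal.tsum_mul_left, ← ENNReal.tsum_mul_right]
  rw [ENNReal.tsum_comm]
  refine tsum_congr fun y => ?_
  rw [← (Equiv.addRight y).tsum_eq]
  refine tsum_congr fun z => ?_
  rw [Equiv.coe_addRight, add_sub_cancel_right, mul_assoc, add_assoc, add_comm y z]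

lemma stepOp_apply_zero (f u : V → ℝ≥0∞) : stepOp f u 0 = ∑' y, f y * u y := by
  simp only [stepOp, zero_add]

lemma tsum_conv (f g : V → ℝ≥0∞) : ∑' x, conv f g x = (∑' x, f x) * ∑' x, g x := by
  simpa only [stepOp_const, mul_one] using congrFun (stepOp_conv f g fun _ => 1) 0

lemma conv_conv_eq_tsum_prod (f g h : V → ℝ≥0∞) (x : V) :
    conv f (conv g h) x = ∑' p : V × V, f p.1 * g p.2 * h (x - p.1 - p.2) := by
  simp only [ENNReal.tsum_prod', conv, ← ENNReal.tsum_mul_left, mul_assoc]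

lemma conv_eq_stepOp (f g : V → ℝ≥0∞) (x : V) : conv f g x = stepOp f (fun y => g (-y)) (-x) := by
  simp only [conv, stepOp, neg_add, neg_neg, sub_eq_add_neg]

lemma conv_assoc (f g h : V → ℝ≥0∞) : conv (conv f g) h = conv f (conv g h) := by
  funext x
  simp only [conv_eq_stepOp _ h, stepOp_conv]
  simp only [conv_eq_stepOp f, conv_eq_stepOp g, neg_neg]

lemma conv_add_const_mul (f a b : V → ℝ≥0∞) (c : ℝ≥0∞) (x : V) :
    conv f (fun y => a y + c * b y) x = conv f a x + c * conv f b x := by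
  simp only [conv, mul_add, mul_left_comm _ c, ENNReal.tsum_add, ENNReal.tsum_mul_left]

lemma conv_map_apply_of_invariant (φ : V ≃+ V) (hf : ∀ x, f (φ x) = f x) (hg : ∀ x, g (φ x) = g x)
    (x : V) : conv f g (φ x) = conv f g x := by
  rw [conv, ← φ.toEquiv.tsum_eq]
  refine tsum_congr fun y => ?_
  rw [AddEquiv.toEquiv_eq_coe, AddEquiv.coe_toEquiv, hf, ← map_sub, hg]

lemma conv_even (hf : f.Even) (hg : g.Even) : (conv f g).Even :=
  conv_map_apply_of_invariant (AddEquiv.neg V) hf hg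

lemma two_mul_stepOp_of_even (hf : f.Even) (u : V → ℝ≥0∞) (x : V) :
    2 * stepOp f u x = ∑' y, f y * (u (x + y) + u (x - y)) := by
  have reflect : stepOp f u x = ∑' y, f y * u (x - y) := by
    rw [stepOp, ← (Equiv.neg V).tsum_eq]
    refine tsum_congr fun y => ?_
    rw [Equiv.neg_apply, hf, sub_eq_add_neg]
  simp only [mul_add, ENNReal.tsum_add]
  rw [← reflect, two_mul]
  rfl

end StepOperator

section Moments

variable {d : ℕ}

/-- The squared Euclidean norm as an observable with values in `ℝ≥0∞`. -/
def sqNormE (x : Fin d → ℤ) : ℝ≥0∞ := ENNReal.ofReal (sqNorm x)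

/-- The second moment of the weights `f` about the origin. -/
def secondMoment (f : (Fin d → ℤ) → ℝ≥0∞) : ℝ≥0∞ := ∑' x, f x * sqNormE x

/-- The fourth moment of the weights `f` about the origin. -/
def fourthMoment (f : (Fin d → ℤ) → ℝ≥0∞) : ℝ≥0∞ := ∑' x, f x * sqNormE x ^ 2

lemma sqNorm_nonneg (x : Fin d → ℤ) : 0 ≤ sqNorm x :=
  Finset.sum_nonneg fun _ _ => sq_nonneg _

lemma sqNorm_add (x y : Fin d → ℤ) :
    sqNorm (x + y) = sqNorm x + 2 * (∑ i, (x i : ℝ) * y i) + sqNorm y := by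
  simp only [sqNorm, ← Finset.sum_add_distrib, Finset.mul_sum, Pi.add_apply, Int.cast_add]
  exact Finset.sum_congr rfl fun i _ => by ring

lemma sqNorm_add_add_sqNorm_sub (x y : Fin d → ℤ) :
    sqNorm (x + y) + sqNorm (x - y) = 2 * sqNorm x + 2 * sqNorm y := by
  simp only [sqNorm, ← Finset.sum_add_distrib, Finset.mul_sum, Pi.add_apply, Pi.sub_apply,
    Int.cast_add, Int.cast_sub]
  exact Finset.sum_congr rfl fun i _ => by ring

lemma sqNorm_add_sq_add_sqNorm_sub_sq_le (x y : Fin d → ℤ) :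
    sqNorm (x + y) ^ 2 + sqNorm (x - y) ^ 2 ≤
      2 * (sqNorm x ^ 2 + 6 * (sqNorm x * sqNorm y) + sqNorm y ^ 2) := by
  have cauchy_schwarz : (∑ i, (x i : ℝ) * y i) ^ 2 ≤ sqNorm x * sqNorm y :=
    Finset.sum_mul_sq_le_sq_mul_sq _ _ _
  rw [eq_sub_of_add_eq' (sqNorm_add_add_sqNorm_sub x y), sqNorm_add]
  nlinarith

lemma sqNormE_add_add_sqNormE_sub (x y : Fin d → ℤ) :
    sqNormE (x + y) + sqNormE (x - y) = 2 * (sqNormE x + sqNormE y) := by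
  simp only [sqNormE]
  rw [← ENNReal.ofReal_add (sqNorm_nonneg _) (sqNorm_nonneg _), sqNorm_add_add_sqNorm_sub,
    ← mul_add, ENNReal.ofReal_mul zero_le_two, ENNReal.ofReal_ofNat,
    ENNReal.ofReal_add (sqNorm_nonneg _) (sqNorm_nonneg _)]

lemma sqNormE_add_sq_add_sqNormE_sub_sq_le (x y : Fin d → ℤ) :
    sqNormE (x + y) ^ 2 + sqNormE (x - y) ^ 2 ≤
      2 * (sqNormE x ^ 2 + 6 * (sqNormE x * sqNormE y) + sqNormE y ^ 2) := by
  have hx := sqNorm_nonneg x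
  have hy := sqNorm_nonneg y
  simp only [sqNormE, ← ENNReal.ofReal_pow (sqNorm_nonneg _)]
  rw [← ENNReal.ofReal_add (by positivity) (by positivity)]
  refine (ENNReal.ofReal_le_ofReal (sqNorm_add_sq_add_sqNorm_sub_sq_le x y)).trans_eq ?_
  rw [ENNReal.ofReal_mul zero_le_two, ENNReal.ofReal_add (by positivity) (by positivity),
    ENNReal.ofReal_add (by positivity) (by positivity), ENNReal.ofReal_mul (by norm_num),
    ENNReal.ofReal_mul hx, ENNReal.ofReal_ofNat, ENNReal.ofReal_ofNat]

lemma sqNormE_zero : sqNormE (0 : Fin d → ℤ) = 0 := by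
  simp [sqNormE, sqNorm]

lemma stepOp_sqNormE {f : (Fin d → ℤ) → ℝ≥0∞} (hf : f.Even) :
    stepOp f sqNormE = fun x => (∑' y, f y) * sqNormE x + secondMoment f := by
  funext x
  have doubled := two_mul_stepOp_of_even hf sqNormE x
  simp only [sqNormE_add_add_sqNormE_sub, mul_left_comm _ (2 : ℝ≥0∞), ENNReal.tsum_mul_left,
    mul_add, ENNReal.tsum_add, ENNReal.tsum_mul_right] at doubled
  rw [← mul_add] at doubled
  exact (ENNReal.mul_right_inj two_ne_zero ENNReal.ofNat_ne_top).1 doubled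

lemma stepOp_sqNormE_sq_le {f : (Fin d → ℤ) → ℝ≥0∞} (hf : f.Even) (x : Fin d → ℤ) :
    stepOp f (sqNormE · ^ 2) x ≤
      (∑' y, f y) * sqNormE x ^ 2 + 6 * secondMoment f * sqNormE x + fourthMoment f := by
  have doubled : 2 * stepOp f (sqNormE · ^ 2) x ≤
      2 * ((∑' y, f y) * sqNormE x ^ 2 + 6 * secondMoment f * sqNormE x + fourthMoment f) := by
    rw [two_mul_stepOp_of_even hf]
    calc ∑' y, f y * (sqNormE (x + y) ^ 2 + sqNormE (x - y) ^ 2)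
      _ ≤ ∑' y, f y * (2 * (sqNormE x ^ 2 + 6 * (sqNormE x * sqNormE y) + sqNormE y ^ 2)) := by
          gcongr
          exact sqNormE_add_sq_add_sqNormE_sub_sq_le _ _
      _ = _ := by
          simp only [secondMoment, fourthMoment, ← ENNReal.tsum_mul_right, ← ENNReal.tsum_mul_left,
            ← ENNReal.tsum_add]
          exact tsum_congr fun y => by ring
  exact (ENNReal.mul_le_mul_iff_right two_ne_zero ENNReal.ofNat_ne_top).1 doubled

lemma secondMoment_conv (f : (Fin d → ℤ) → ℝ≥0∞) {g : (Fin d → ℤ) → ℝ≥0∞} (hg : g.Even) :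
    secondMoment (conv f g) = (∑' x, g x) * secondMoment f + (∑' x, f x) * secondMoment g := by
  have := congrFun (stepOp_conv f g sqNormE) 0
  rw [stepOp_sqNormE hg, stepOp_add, stepOp_const_mul, stepOp_const] at this
  simp only [stepOp_apply_zero] at this
  exact this

lemma fourthMoment_conv_le (f : (Fin d → ℤ) → ℝ≥0∞) {g : (Fin d → ℤ) → ℝ≥0∞} (hg : g.Even) :
    fourthMoment (conv f g) ≤ (∑' x, g x) * fourthMoment f +
      6 * secondMoment g * secondMoment f + (∑' x, f x) * fourthMoment g := by
  calc fourthMoment (conv f g) = stepOp f (stepOp g (sqNormE · ^ 2)) 0 := by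
        rw [← stepOp_conv, stepOp_apply_zero, fourthMoment]
    _ ≤ stepOp f (fun x => (∑' y, g y) * sqNormE x ^ 2 + 6 * secondMoment g * sqNormE x +
          fourthMoment g) 0 := stepOp_mono le_rfl (fun x => stepOp_sqNormE_sq_le hg x) 0
    _ = _ := by
        rw [stepOp_add, stepOp_add, stepOp_const_mul, stepOp_const_mul, stepOp_const]
        simp only [stepOp_apply_zero]
        rfl

lemma sqNormE_le_sq (x : Fin d → ℤ) : sqNormE x ≤ sqNormE x ^ 2 := by
  rw [sqNormE, ← ENNReal.ofReal_pow (sqNorm_nonneg x)]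
  refine ENNReal.ofReal_le_ofReal ?_
  have integral : sqNorm x = ((∑ i, x i ^ 2 : ℤ) : ℝ) := by simp [sqNorm]
  rw [integral]
  exact_mod_cast Int.le_self_sq _

lemma secondMoment_le_fourthMoment (f : (Fin d → ℤ) → ℝ≥0∞) : secondMoment f ≤ fourthMoment f :=
  ENNReal.tsum_le_tsum fun x => mul_le_mul_right (sqNormE_le_sq x) _

end Moments

section ExponentialDecay

lemma tsum_prod_apply_eq_pow (e : ℤ → ℝ≥0∞) (d : ℕ) :
    ∑' x : Fin d → ℤ, ∏ i, e (x i) = (∑' n, e n) ^ d := by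
  induction d with
  | zero => simp [tsum_fintype]
  | succ n ih =>
    rw [← (Fin.consEquiv fun _ : Fin (n + 1) => ℤ).tsum_eq, ENNReal.tsum_prod', pow_succ']
    simp only [Fin.consEquiv, Equiv.coe_fn_mk, Fin.prod_univ_succ, Fin.cons_zero, Fin.cons_succ,
      ENNReal.tsum_mul_left, ih, ENNReal.tsum_mul_right]

variable {d : ℕ}

lemma supNorm_nonneg (x : Fin d → ℤ) : 0 ≤ supNorm x := Nat.cast_nonneg _

lemma abs_apply_le_supNorm (x : Fin d → ℤ) (i : Fin d) : |(x i : ℝ)| ≤ supNorm x := by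
  rw [← Int.cast_abs, ← Nat.cast_natAbs, supNorm, Nat.cast_le]
  exact Finset.le_sup (f := fun i => (x i).natAbs) (Finset.mem_univ i)

lemma sum_abs_le_mul_supNorm (x : Fin d → ℤ) : ∑ i, |(x i : ℝ)| ≤ d * supNorm x := by
  simpa using Finset.sum_le_card_nsmul Finset.univ _ _ fun i _ => abs_apply_le_supNorm x i

lemma sqNorm_le_mul_supNorm_sq (x : Fin d → ℤ) : sqNorm x ≤ d * supNorm x ^ 2 := by
  simpa [sqNorm] using Finset.sum_le_card_nsmul Finset.univ (fun i => (x i : ℝ) ^ 2) _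
    fun i _ => sq_le_sq.2 ((abs_apply_le_supNorm x i).trans (le_abs_self _))

lemma tsum_exp_neg_mul_abs_lt_top {c : ℝ} (hc : 0 < c) :
    ∑' n : ℤ, ENNReal.ofReal (Real.exp (-c * |(n : ℝ)|)) < ∞ := by
  have geometric : Summable fun n : ℕ => Real.exp (-c * n) := by
    simpa only [mul_comm] using Real.summable_exp_nat_mul_iff.2 (neg_lt_zero.2 hc)
  have : Summable fun n : ℤ => Real.exp (-c * |(n : ℝ)|) :=
    .of_nat_of_neg (by simpa using geometric) (by simpa using geometric)
  rw [← ENNReal.ofReal_tsum_of_nonneg (fun _ => (Real.exp_pos _).le) this]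
  exact ENNReal.ofReal_lt_top

lemma tsum_exp_neg_mul_supNorm_lt_top {c : ℝ} (hc : 0 < c) :
    ∑' x : Fin d → ℤ, ENNReal.ofReal (Real.exp (-c * supNorm x)) < ∞ := by
  rcases d.eq_zero_or_pos with rfl | hd
  · simp [tsum_fintype]
  have hd : (0 : ℝ) < d := Nat.cast_pos.2 hd
  refine lt_of_le_of_lt (ENNReal.tsum_le_tsum fun x => ?_)
    ((tsum_prod_apply_eq_pow (fun n => ENNReal.ofReal (Real.exp (-(c / d) * |(n : ℝ)|))) d).trans_lt
      (ENNReal.pow_lt_top (tsum_exp_neg_mul_abs_lt_top (div_pos hc hd))))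
  rw [← ENNReal.ofReal_prod_of_nonneg (fun _ _ => (Real.exp_pos _).le), ← Real.exp_sum,
    ← Finset.mul_sum]
  refine ENNReal.ofReal_le_ofReal (Real.exp_le_exp.2 ?_)
  calc -c * supNorm x = -(c / d) * (d * supNorm x) := by field_simp
    _ ≤ -(c / d) * ∑ i, |(x i : ℝ)| :=
      mul_le_mul_of_nonpos_left (sum_abs_le_mul_supNorm x) (neg_nonpos.2 (by positivity))

lemma sqNorm_pow_le_mul_exp {c : ℝ} (hc : 0 < c) (k : ℕ) (x : Fin d → ℤ) :
    sqNorm x ^ k ≤ d ^ k * ((2 * k).factorial / c ^ (2 * k)) * Real.exp (c * supNorm x) := by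
  have hs := supNorm_nonneg x
  have power_series_term : supNorm x ^ (2 * k) ≤
      (2 * k).factorial / c ^ (2 * k) * Real.exp (c * supNorm x) := by
    have := Real.pow_div_factorial_le_exp (c * supNorm x) (by positivity) (2 * k)
    rw [div_le_iff₀ (by positivity), mul_pow] at this
    rw [div_mul_eq_mul_div, le_div_iff₀ (by positivity)]
    linarith
  calc sqNorm x ^ k ≤ (d * supNorm x ^ 2) ^ k :=
        pow_le_pow_left₀ (sqNorm_nonneg x) (sqNorm_le_mul_supNorm_sq x) k
    _ = d ^ k * supNorm x ^ (2 * k) := by rw [mul_pow, pow_mul]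
    _ ≤ _ := by rw [mul_assoc]; gcongr

lemma tsum_mul_sqNormE_pow_lt_top {f : (Fin d → ℤ) → ℝ≥0∞} {C c : ℝ} (hC : 0 < C) (hc : 0 < c)
    (hf : ∀ x, f x ≤ ENNReal.ofReal (C * Real.exp (-c * supNorm x))) (k : ℕ) :
    ∑' x, f x * sqNormE x ^ k < ∞ := by
  set A : ℝ := d ^ k * ((2 * k).factorial / (c / 2) ^ (2 * k))
  have half_rate (x : Fin d → ℤ) : f x * sqNormE x ^ k ≤
      ENNReal.ofReal (C * A) * ENNReal.ofReal (Real.exp (-(c / 2) * supNorm x)) := by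
    have hq := sqNorm_nonneg x
    refine (mul_le_mul_left (hf x) _).trans ?_
    rw [sqNormE, ← ENNReal.ofReal_pow hq, ← ENNReal.ofReal_mul (by positivity),
      ← ENNReal.ofReal_mul (by positivity)]
    refine ENNReal.ofReal_le_ofReal ?_
    calc C * Real.exp (-c * supNorm x) * sqNorm x ^ k
      _ ≤ C * Real.exp (-c * supNorm x) * (A * Real.exp (c / 2 * supNorm x)) := by
          gcongr; exact sqNorm_pow_le_mul_exp (half_pos hc) k x
      _ = C * A * (Real.exp (-c * supNorm x) * Real.exp (c / 2 * supNorm x)) := by ring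
      _ = C * A * Real.exp (-(c / 2) * supNorm x) := by rw [← Real.exp_add]; ring_nf
  refine (ENNReal.tsum_le_tsum half_rate).trans_lt ?_
  rw [ENNReal.tsum_mul_left]
  exact ENNReal.mul_lt_top ENNReal.ofReal_lt_top (tsum_exp_neg_mul_supNorm_lt_top (half_pos hc))

end ExponentialDecay

section RightDini

open Filter Topology

/-- The upper right Dini derivative of `f` at `t` is at most `c`. That the lower right Dini
derivative is at least `c` is expressed as `HasRightDiniLE (fun s => -f s) (-c) t`. -/
def HasRightDiniLE (f : ℝ → ℝ) (c t : ℝ) : Prop :=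
  ∀ r, c < r → ∀ᶠ z in 𝓝[>] t, slope f t z < r

variable {f g φ : ℝ → ℝ} {a b c c' φ' m t : ℝ}

namespace HasRightDiniLE

lemma mono (hf : HasRightDiniLE f c t) (h : c ≤ c') : HasRightDiniLE f c' t :=
  fun r hr => hf r (h.trans_lt hr)

lemma congr (hf : HasRightDiniLE f c t) (h : f =ᶠ[𝓝[>] t] g) (ht : f t = g t) :
    HasRightDiniLE g c t := by
  intro r hr
  filter_upwards [hf r hr, h] with s hs hfg
  rwa [slope_def_field, ← hfg, ← ht, ← slope_def_field]

lemma add (hf : HasRightDiniLE f c t) (hg : HasRightDiniLE g c' t) :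
    HasRightDiniLE (fun s => f s + g s) (c + c') t := by
  intro r hr
  filter_upwards [hf (c + (r - (c + c')) / 2) (by linarith),
    hg (c' + (r - (c + c')) / 2) (by linarith)] with z hfz hgz
  have : slope (fun s => f s + g s) t z = slope f t z + slope g t z := by
    simp only [slope_def_field]; ring
  linarith

lemma const_mul {k : ℝ} (hk : 0 < k) (hf : HasRightDiniLE f c t) :
    HasRightDiniLE (fun s => k * f s) (k * c) t := by
  intro r hr
  filter_upwards [hf (r / k) ((lt_div_iff₀' hk).2 hr)] with z hz
  rw [lt_div_iff₀' hk] at hz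
  rwa [slope_def_field, ← mul_sub, mul_div_assoc, ← slope_def_field]

lemma of_hasDerivAt (hf : HasDerivAt f c t) : HasRightDiniLE f c t := fun _ hr =>
  ((hasDerivAt_iff_tendsto_slope.1 hf).mono_left (nhdsGT_le_nhdsNE t)).eventually_lt_const hr

lemma of_le_add_mul {K : ℝ → ℝ} (h : ∀ᶠ s in 𝓝[>] t, f s ≤ f t + (s - t) * K s)
    (hK : Tendsto K (𝓝[>] t) (𝓝 c)) : HasRightDiniLE f c t := by
  intro r hr
  filter_upwards [h, hK.eventually_lt_const hr, self_mem_nhdsWithin] with s hs hKs hts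
  rw [slope_def_field, div_lt_iff₀ (sub_pos.2 hts)]
  linarith [mul_lt_mul_of_pos_left hKs (sub_pos.2 hts)]

lemma comp_hasDerivAt (hf : HasRightDiniLE f c t) (hcont : Tendsto f (𝓝[>] t) (𝓝 (f t)))
    (hφ : HasDerivAt φ φ' (f t)) (hφ' : 0 < φ') :
    HasRightDiniLE (fun s => φ (f s)) (φ' * c) t := by
  intro r hr
  obtain ⟨r', hcr', hr'⟩ := exists_between ((lt_div_iff₀' hφ').2 hr)
  have quotient_tendsto : Tendsto (fun s => dslope φ (f t) (f s)) (𝓝[>] t) (𝓝 φ') := by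
    have := continuousAt_dslope_same.2 hφ.differentiableAt
    rw [ContinuousAt, dslope_same, hφ.deriv] at this
    exact this.comp hcont
  filter_upwards [hf r' hcr', quotient_tendsto.eventually_const_lt hφ',
    (quotient_tendsto.mul_const r').eventually_lt_const ((lt_div_iff₀' hφ').1 hr')]
    with s hs hpos hlt
  have factored : slope (fun s => φ (f s)) t s = dslope φ (f t) (f s) * slope f t s := by
    rw [slope_def_field, slope_def_field, ← sub_smul_dslope φ (f t), smul_eq_mul]
    ring
  rw [factored]
  exact (mul_lt_mul_of_pos_left hs hpos).trans hlt

lemma log (hf : HasRightDiniLE f c t) (hcont : Tendsto f (𝓝[>] t) (𝓝 (f t))) (hpos : 0 < f t) :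
    HasRightDiniLE (fun s => Real.log (f s)) (c / f t) t := by
  simpa only [div_eq_inv_mul] using
    hf.comp_hasDerivAt hcont (Real.hasDerivAt_log hpos.ne') (inv_pos.2 hpos)

lemma neg_log (hf : HasRightDiniLE (fun s => -f s) (-c) t)
    (hcont : Tendsto f (𝓝[>] t) (𝓝 (f t))) (hpos : 0 < f t) :
    HasRightDiniLE (fun s => -Real.log (f s)) (-(c / f t)) t := by
  have hderiv := (Real.hasDerivAt_log (neg_ne_zero.2 hpos.ne')).neg
  convert! hf.comp_hasDerivAt hcont.neg hderiv (by simpa using hpos) using 1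
  · simp only [Pi.neg_apply, Real.log_neg_eq_log]
  · field_simp

lemma inv (hf : HasRightDiniLE (fun s => -f s) (-(c * f t ^ 2)) t)
    (hcont : Tendsto f (𝓝[>] t) (𝓝 (f t))) (hpos : 0 < f t) :
    HasRightDiniLE (fun s => (f s)⁻¹) (-c) t := by
  have hderiv := (hasDerivAt_inv (neg_ne_zero.2 hpos.ne')).neg
  convert! hf.comp_hasDerivAt hcont.neg hderiv
    (by simp only [even_two, Even.neg_pow, neg_neg, inv_pos]; positivity) using 1
  · simp only [Pi.neg_apply, inv_neg, neg_neg]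
  · field_simp

lemma le_of_forall_nonpos (hf : ∀ t ∈ Set.Ico a b, HasRightDiniLE f 0 t) (hab : a ≤ b)
    (hcont : ContinuousOn f (Set.Icc a b)) : f b ≤ f a :=
  image_le_of_liminf_slope_right_le_deriv_boundary (B := fun _ => f a) (B' := fun _ => 0) hcont
    le_rfl continuousOn_const (fun _ _ => hasDerivWithinAt_const ..)
    (fun t ht r hr => (hf t ht r hr).frequently) (Set.right_mem_Icc.2 hab)

lemma le_of_neg_of_eq {f' : ℝ → ℝ} (hf : ∀ t ∈ Set.Ico a b, HasRightDiniLE f (f' t) t)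
    (hab : a ≤ b) (hcont : ContinuousOn f (Set.Icc a b)) (ha : f a ≤ m)
    (hneg : ∀ t ∈ Set.Ico a b, f t = m → f' t < 0) : f b ≤ m :=
  image_le_of_liminf_slope_right_lt_deriv_boundary' (B := fun _ => m) (B' := fun _ => 0) hcont
    (fun t ht r hr => (hf t ht r hr).frequently) ha continuousOn_const
    (fun _ _ => hasDerivWithinAt_const ..) hneg (Set.right_mem_Icc.2 hab)

lemma neg_of_hasSum {α : Type*} {φ : ℝ → ℝ} {F : ℝ → α → ℝ} {F' h : α → ℝ}
    (hmono : ∀ᶠ s in 𝓝[>] t, F t ≤ F s) (hsum : ∀ᶠ s in 𝓝[>] t, HasSum (F s) (φ s))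
    (hsum_t : HasSum (F t) (φ t)) (hderiv : ∀ x, HasDerivWithinAt (F · x) (F' x) (Set.Ioi t) t)
    (hle : h ≤ F') (hh : HasSum h c) : HasRightDiniLE (fun s => -φ s) (-c) t := by
  intro r hr
  obtain ⟨S, hS⟩ := (hh.eventually (lt_mem_nhds (neg_lt.1 hr))).exists
  have partial_sum : ∀ᶠ s in 𝓝[>] t, -r < slope (fun s => ∑ x ∈ S, F s x) t s :=
    ((hasDerivWithinAt_iff_tendsto_slope' Set.self_notMem_Ioi).1
      (HasDerivWithinAt.fun_sum fun x _ => hderiv x)).eventually_const_lt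
      (hS.trans_le (Finset.sum_le_sum fun x _ => hle x))
  filter_upwards [partial_sum, hmono, hsum, self_mem_nhdsWithin] with s hs hmono_s hsum_s hts
  have hts : 0 < s - t := sub_pos.2 hts
  rw [slope_def_field, lt_div_iff₀ hts, ← Finset.sum_sub_distrib] at hs
  have partial_le := sum_le_hasSum S (fun x _ => sub_nonneg.2 (hmono_s x)) (hsum_s.sub hsum_t)
  rw [slope_def_field, div_lt_iff₀ hts]
  linarith

end HasRightDiniLE

end RightDini

section MomentSystem

open Filter Topology Set

/-- The differential inequalities on `[0, b]` linking the susceptibility `χ`, the second moment `V`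
and the fourth moment `U` of `F`. The upper bounds are in integrated form and come from (I.1);
the lower bounds are on right Dini derivatives and come from (I.2), `δ` bounding the error `E`. -/
structure MomentSystem (χ V U : ℝ → ℝ) (b δ : ℝ) : Prop where
  le_tenth : δ ≤ 1 / 10
  chi_pos : ∀ t ∈ Icc 0 b, 0 < χ t
  V_pos : ∀ t ∈ Icc 0 b, 0 < V t
  U_pos : ∀ t ∈ Icc 0 b, 0 < U t
  chi_mono : MonotoneOn χ (Icc 0 b)
  V_mono : MonotoneOn V (Icc 0 b)
  U_mono : MonotoneOn U (Icc 0 b)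
  chi_le : ∀ s t, 0 ≤ s → s ≤ t → t ≤ b → χ t ≤ χ s + (t - s) * (χ s * χ t)
  V_le : ∀ s t, 0 ≤ s → s ≤ t → t ≤ b → V t ≤ V s + (t - s) * (χ t * V s + χ s * V t)
  U_le : ∀ s t, 0 ≤ s → s ≤ t → t ≤ b →
    U t ≤ U s + (t - s) * (χ t * U s + 6 * V t * V s + χ s * U t)
  chi_dini : ∀ t ∈ Ico 0 b, HasRightDiniLE (fun s => -χ s) (-((1 - δ) * χ t ^ 2)) t
  V_dini : ∀ t ∈ Ico 0 b, HasRightDiniLE (fun s => -V s) (-((2 - 2 * δ) * (χ t * V t))) t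

lemma continuousOn_of_monotoneOn_of_le_add_mul {f : ℝ → ℝ} {a b C : ℝ}
    (hf : MonotoneOn f (Icc a b)) (h : ∀ s t, a ≤ s → s ≤ t → t ≤ b → f t ≤ f s + (t - s) * C) :
    ContinuousOn f (Icc a b) := by
  refine (LipschitzOnWith.of_le_add_mul C.toNNReal fun s hs t ht => ?_).continuousOn
  rw [Real.dist_eq, Real.coe_toNNReal']
  rcases le_total s t with hst | hts
  · have := hf hs ht hst
    have : 0 ≤ max C 0 * |s - t| := by positivity
    linarith
  · rw [abs_of_nonneg (sub_nonneg.2 hts), mul_comm]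
    refine (h t s ht.1 hts hs.2).trans ?_
    gcongr
    exact le_max_left _ _

lemma tendsto_nhdsGT_of_continuousOn_Icc {f : ℝ → ℝ} {a b t : ℝ} (hf : ContinuousOn f (Icc a b))
    (ht : t ∈ Ico a b) : Tendsto f (𝓝[>] t) (𝓝 (f t)) :=
  (hf t (Ico_subset_Icc_self ht)).mono_left (nhdsWithin_le_of_mem (Icc_mem_nhdsGT_of_mem ht))

namespace MomentSystem

variable {χ V U : ℝ → ℝ} {b δ s t : ℝ}

lemma chi_continuousOn (S : MomentSystem χ V U b δ) : ContinuousOn χ (Icc 0 b) := by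
  refine continuousOn_of_monotoneOn_of_le_add_mul S.chi_mono (C := χ b * χ b) fun s t hs hst ht =>
    (S.chi_le s t hs hst ht).trans ?_
  have hsb : s ∈ Icc 0 b := ⟨hs, hst.trans ht⟩
  have htb : t ∈ Icc 0 b := ⟨hs.trans hst, ht⟩
  have hb : b ∈ Icc 0 b := right_mem_Icc.2 (htb.1.trans ht)
  have := S.chi_pos b hb
  have := sub_nonneg.2 hst
  have := S.chi_pos t htb
  gcongr
  exacts [S.chi_mono hsb hb hsb.2, S.chi_mono htb hb ht]

lemma V_continuousOn (S : MomentSystem χ V U b δ) : ContinuousOn V (Icc 0 b) := by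
  refine continuousOn_of_monotoneOn_of_le_add_mul S.V_mono (C := χ b * V b + χ b * V b)
    fun s t hs hst ht => (S.V_le s t hs hst ht).trans ?_
  have hsb : s ∈ Icc 0 b := ⟨hs, hst.trans ht⟩
  have htb : t ∈ Icc 0 b := ⟨hs.trans hst, ht⟩
  have hb : b ∈ Icc 0 b := right_mem_Icc.2 (htb.1.trans ht)
  have := S.chi_pos b hb
  have := sub_nonneg.2 hst
  have := S.V_pos t htb
  have := S.V_pos s hsb
  gcongr
  exacts [S.chi_mono htb hb ht, S.V_mono hsb hb hsb.2, S.chi_mono hsb hb hsb.2,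
    S.V_mono htb hb ht]

lemma U_continuousOn (S : MomentSystem χ V U b δ) : ContinuousOn U (Icc 0 b) := by
  refine continuousOn_of_monotoneOn_of_le_add_mul S.U_mono
    (C := χ b * U b + 6 * V b * V b + χ b * U b) fun s t hs hst ht =>
    (S.U_le s t hs hst ht).trans ?_
  have hsb : s ∈ Icc 0 b := ⟨hs, hst.trans ht⟩
  have htb : t ∈ Icc 0 b := ⟨hs.trans hst, ht⟩
  have hb : b ∈ Icc 0 b := right_mem_Icc.2 (htb.1.trans ht)
  have := S.chi_pos b hb
  have := sub_nonneg.2 hst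
  have := S.V_pos b hb
  have := S.V_pos s hsb
  have := S.U_pos t htb
  have := S.U_pos s hsb
  gcongr
  exacts [S.chi_mono htb hb ht, S.U_mono hsb hb hsb.2, S.V_mono htb hb ht,
    S.V_mono hsb hb hsb.2, S.chi_mono hsb hb hsb.2, S.U_mono htb hb ht]

lemma chi_tendsto (S : MomentSystem χ V U b δ) (ht : t ∈ Ico 0 b) :
    Tendsto χ (𝓝[>] t) (𝓝 (χ t)) := tendsto_nhdsGT_of_continuousOn_Icc S.chi_continuousOn ht

lemma V_tendsto (S : MomentSystem χ V U b δ) (ht : t ∈ Ico 0 b) :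
    Tendsto V (𝓝[>] t) (𝓝 (V t)) := tendsto_nhdsGT_of_continuousOn_Icc S.V_continuousOn ht

lemma U_tendsto (S : MomentSystem χ V U b δ) (ht : t ∈ Ico 0 b) :
    Tendsto U (𝓝[>] t) (𝓝 (U t)) := tendsto_nhdsGT_of_continuousOn_Icc S.U_continuousOn ht

lemma log_chi_dini (S : MomentSystem χ V U b δ) (ht : t ∈ Ico 0 b) :
    HasRightDiniLE (fun s => Real.log (χ s)) (χ t) t := by
  have hχ := S.chi_pos t (Ico_subset_Icc_self ht)
  have dini : HasRightDiniLE χ (χ t * χ t) t := by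
    refine .of_le_add_mul ?_ ((S.chi_tendsto ht).const_mul (χ t))
    filter_upwards [Ioc_mem_nhdsGT ht.2] with s hs using S.chi_le t s ht.1 hs.1.le hs.2
  simpa only [mul_div_cancel_right₀ _ hχ.ne'] using dini.log (S.chi_tendsto ht) hχ

lemma log_U_dini (S : MomentSystem χ V U b δ) (ht : t ∈ Ico 0 b) :
    HasRightDiniLE (fun s => Real.log (U s)) (2 * χ t + 6 * V t ^ 2 / U t) t := by
  have hU := S.U_pos t (Ico_subset_Icc_self ht)
  have dini : HasRightDiniLE U (χ t * U t + 6 * V t * V t + χ t * U t) t := by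
    refine .of_le_add_mul ?_ (((S.chi_tendsto ht).mul_const _).add
      (((S.V_tendsto ht).const_mul _).mul_const _) |>.add ((S.U_tendsto ht).const_mul _))
    filter_upwards [Ioc_mem_nhdsGT ht.2] with s hs using S.U_le t s ht.1 hs.1.le hs.2
  refine (dini.log (S.U_tendsto ht) hU).mono (le_of_eq ?_)
  field_simp
  ring

lemma neg_log_V_dini (S : MomentSystem χ V U b δ) (ht : t ∈ Ico 0 b) :
    HasRightDiniLE (fun s => -Real.log (V s)) (-((2 - 2 * δ) * χ t)) t := by
  have hV := S.V_pos t (Ico_subset_Icc_self ht)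
  simpa only [← mul_assoc, mul_div_cancel_right₀ _ hV.ne'] using
    (S.V_dini t ht).neg_log (S.V_tendsto ht) hV

lemma sub_mul_chi_le (S : MomentSystem χ V U b δ) (hs : 0 ≤ s) (hst : s ≤ t) (ht : t ≤ b) :
    (1 - δ) * ((t - s) * χ s) ≤ 1 := by
  have sub : Icc s t ⊆ Icc 0 b := Icc_subset_Icc hs ht
  have antitone := HasRightDiniLE.le_of_forall_nonpos (f := fun r => (χ r)⁻¹ + (1 - δ) * r)
    (fun r hr => by
      have hr : r ∈ Ico 0 b := Ico_subset_Ico hs ht hr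
      have hχ := (S.chi_dini r hr).inv (S.chi_tendsto hr) (S.chi_pos r (Ico_subset_Icc_self hr))
      simpa using hχ.add (.of_hasDerivAt ((hasDerivAt_id r).const_mul (1 - δ)))) hst
    (((S.chi_continuousOn.mono sub).inv₀ fun r hr => (S.chi_pos r (sub hr)).ne').add (by fun_prop))
  have hχs := S.chi_pos s (sub (left_mem_Icc.2 hst))
  have hχt := inv_pos.2 (S.chi_pos t (sub (right_mem_Icc.2 hst)))
  calc (1 - δ) * ((t - s) * χ s) = (1 - δ) * (t - s) * χ s := by ring
    _ ≤ (χ s)⁻¹ * χ s := by gcongr; linarith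
    _ = 1 := inv_mul_cancel₀ hχs.ne'

lemma mul_log_chi_sub_le (S : MomentSystem χ V U b δ) (hs : 0 ≤ s) (hst : s ≤ t) (ht : t ≤ b) :
    (2 - 2 * δ) * (Real.log (χ t) - Real.log (χ s)) ≤ Real.log (V t) - Real.log (V s) := by
  have sub : Icc s t ⊆ Icc 0 b := Icc_subset_Icc hs ht
  have hδ := S.le_tenth
  have antitone := HasRightDiniLE.le_of_forall_nonpos
    (f := fun r => (2 - 2 * δ) * Real.log (χ r) + -Real.log (V r))
    (fun r hr => by
      have hr : r ∈ Ico 0 b := Ico_subset_Ico hs ht hr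
      have hχ := (S.log_chi_dini hr).const_mul (k := 2 - 2 * δ) (by linarith)
      simpa only [add_neg_cancel] using hχ.add (S.neg_log_V_dini hr)) hst
    ((((S.chi_continuousOn.mono sub).log fun r hr => (S.chi_pos r (sub hr)).ne').const_mul _).add
      ((S.V_continuousOn.mono sub).log fun r hr => (S.V_pos r (sub hr)).ne').neg)
  linarith

lemma log_kurtosis_eq (S : MomentSystem χ V U b δ) (ht : t ∈ Icc 0 b) :
    Real.log (U t) + Real.log (χ t) + 2 * -Real.log (V t) = Real.log (U t * χ t / V t ^ 2) := by
  have hχ := S.chi_pos t ht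
  have hV := S.V_pos t ht
  have hU := S.U_pos t ht
  rw [Real.log_div (by positivity) (by positivity), Real.log_mul hU.ne' hχ.ne', Real.log_pow]
  push_cast
  ring

/-- The logarithmic kurtosis cannot cross `log B` upwards: where `U χ = B V²` its derivative is at
most `(4 δ - 1) χ + 6 V² / U < 0`. -/
lemma U_mul_chi_le (S : MomentSystem χ V U b δ) {B : ℝ} (hB : 10 < B)
    (h0 : U 0 * χ 0 ≤ B * V 0 ^ 2) (ht : t ∈ Icc 0 b) : U t * χ t ≤ B * V t ^ 2 := by
  have sub : Icc 0 t ⊆ Icc 0 b := Icc_subset_Icc_right ht.2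
  have le_iff {r : ℝ} (hr : r ∈ Icc 0 b) : Real.log (U r) + Real.log (χ r) + 2 * -Real.log (V r) ≤
      Real.log B ↔ U r * χ r ≤ B * V r ^ 2 := by
    have hχ := S.chi_pos r hr
    have hV := S.V_pos r hr
    have hU := S.U_pos r hr
    rw [S.log_kurtosis_eq hr, Real.log_le_log_iff (by positivity) (by positivity),
      div_le_iff₀ (by positivity)]
  rw [← le_iff ht]
  refine HasRightDiniLE.le_of_neg_of_eq
    (f := fun r => Real.log (U r) + Real.log (χ r) + 2 * -Real.log (V r))
    (f' := fun r => 2 * χ r + 6 * V r ^ 2 / U r + χ r + 2 * -((2 - 2 * δ) * χ r))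
    (fun r hr => ?_) ht.1 ?_ ((le_iff ⟨le_rfl, ht.1.trans ht.2⟩).2 h0) fun r hr hrB => ?_
  · have hr : r ∈ Ico 0 b := Ico_subset_Ico_right ht.2 hr
    exact ((S.log_U_dini hr).add (S.log_chi_dini hr)).add ((S.neg_log_V_dini hr).const_mul two_pos)
  · exact (((S.U_continuousOn.mono sub).log fun r hr => (S.U_pos r (sub hr)).ne').add
      ((S.chi_continuousOn.mono sub).log fun r hr => (S.chi_pos r (sub hr)).ne')).add
      ((((S.V_continuousOn.mono sub).log fun r hr => (S.V_pos r (sub hr)).ne').neg).const_mul 2)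
  · have hr := sub (Ico_subset_Icc_self hr)
    have hχ := S.chi_pos r hr
    have hV := S.V_pos r hr
    have hU := S.U_pos r hr
    have hδ := S.le_tenth
    rw [S.log_kurtosis_eq hr] at hrB
    have kurtosis_eq := Real.log_injOn_pos (mem_Ioi.2 (by positivity)) (mem_Ioi.2 (by linarith)) hrB
    have : 6 * V r ^ 2 / U r = 6 / B * χ r := by rw [← kurtosis_eq]; field_simp
    have : 6 / B < 6 / 10 := by gcongr
    nlinarith

end MomentSystem

end MomentSystem

section Symmetry

variable {d : ℕ}

/-- The signed permutations of the coordinates, which generate the symmetries in `IsSymmFun`. -/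
def signedPerm (π : Equiv.Perm (Fin d)) (e : Fin d → Bool) : (Fin d → ℤ) ≃+ (Fin d → ℤ) where
  toFun x i := (if e i then -1 else 1) * x (π i)
  invFun x i := (if e (π.symm i) then -1 else 1) * x (π.symm i)
  left_inv x := by funext i; simp only [Equiv.apply_symm_apply]; split <;> simp
  right_inv x := by funext i; simp only [Equiv.symm_apply_apply]; split <;> simp
  map_add' x y := by funext i; simp only [Pi.add_apply, mul_add]

lemma IsSymmFun.even {α : Type*} {f : (Fin d → ℤ) → α} (hf : IsSymmFun f) : f.Even := fun x => by
  simpa only [if_true, neg_one_mul] using! hf 1 (fun _ => true) x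

lemma IsSymmFun.conv {f g : (Fin d → ℤ) → ℝ≥0∞} (hf : IsSymmFun f) (hg : IsSymmFun g) :
    IsSymmFun (conv f g) :=
  fun π e => conv_map_apply_of_invariant (signedPerm π e) (hf π e) (hg π e)

end Symmetry

/-- A bound on the kurtosis `χ U / V²` of the effective walk, uniform below `β(δ)`. At `β = 0` the
kurtosis of `J` is at most `d² / c₀⁴`, and the differential inequalities preserve every bound
above `10`. -/
def kurtosisBound (d : ℕ) (c₀ : ℝ) : ℝ := 11 + d ^ 2 / c₀ ^ 4

lemma ten_lt_kurtosisBound (d : ℕ) (c₀ : ℝ) : 10 < kurtosisBound d c₀ := by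
  have : 0 ≤ d ^ 2 / c₀ ^ 4 := by positivity
  rw [kurtosisBound]
  linarith

namespace Model

open Set Filter Topology

variable {d : ℕ} {c₀ : ℝ} {s t b δ : ℝ}

/-- The kernel `J` with values in `ℝ≥0∞`. -/
def kernelE (M : Model d c₀) (x : Fin d → ℤ) : ℝ≥0∞ := ENNReal.ofReal (M.K.J x)

/-- The error kernel `H_t` with values in `ℝ≥0∞`. -/
def errorE (M : Model d c₀) (t : ℝ) (x : Fin d → ℤ) : ℝ≥0∞ := ENNReal.ofReal (M.H t x)

/-- The parameters in `[0, β_c)`. -/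
def subcritical (M : Model d c₀) : Set ℝ := {t | 0 ≤ t ∧ ENNReal.ofReal t < M.βc}

lemma mem_subcritical_of_le {M : Model d c₀} (ht : t ∈ M.subcritical) (hs : 0 ≤ s) (hst : s ≤ t) :
    s ∈ M.subcritical :=
  ⟨hs, (ENNReal.ofReal_le_ofReal hst).trans_lt ht.2⟩

lemma F_eq_conv (M : Model d c₀) (t : ℝ) : M.F t = conv M.kernelE (M.G t) := rfl

lemma kernelE_isSymmFun (M : Model d c₀) : IsSymmFun M.kernelE := fun π e x =>
  congrArg ENNReal.ofReal (M.K.symm π e x)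

lemma F_isSymmFun (M : Model d c₀) (t : ℝ) : IsSymmFun (M.F t) :=
  M.kernelE_isSymmFun.conv (M.symm t)

lemma errorE_even (M : Model d c₀) (t : ℝ) : (M.errorE t).Even := fun x =>
  congrArg ENNReal.ofReal (M.H_symm t x)

section Kernel

lemma tsum_kernelE (M : Model d c₀) : ∑' x, M.kernelE x = 1 := by
  simp only [kernelE]
  rw [← ENNReal.ofReal_tsum_of_nonneg M.K.nonneg M.K.summable, M.K.norm_one, ENNReal.ofReal_one]

lemma sigma_sq (M : Model d c₀) : M.sigma ^ 2 = ∑' x, sqNorm x * M.K.J x :=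
  Real.sq_sqrt (tsum_nonneg fun x => mul_nonneg (sqNorm_nonneg x) (M.K.nonneg x))

lemma secondMoment_kernelE (M : Model d c₀) :
    secondMoment M.kernelE = ENNReal.ofReal (M.sigma ^ 2) := by
  rw [sigma_sq, ENNReal.ofReal_tsum_of_nonneg
    (fun x => mul_nonneg (sqNorm_nonneg x) (M.K.nonneg x)) M.K.summable_sq]
  refine tsum_congr fun x => ?_
  rw [ENNReal.ofReal_mul (sqNorm_nonneg x), mul_comm]
  rfl

lemma fourthMoment_kernelE_le (M : Model d c₀) :
    fourthMoment M.kernelE ≤ ENNReal.ofReal ((d * M.K.R ^ 2) ^ 2) := by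
  have finite_range (x : Fin d → ℤ) :
      M.kernelE x * sqNormE x ^ 2 ≤ M.kernelE x * ENNReal.ofReal ((d * M.K.R ^ 2) ^ 2) := by
    rcases (M.K.nonneg x).eq_or_lt with hx | hx
    · simp [kernelE, ← hx]
    · rw [sqNormE, ← ENNReal.ofReal_pow (sqNorm_nonneg x)]
      have := sqNorm_nonneg x
      have := supNorm_nonneg x
      have := M.K.range_le x hx
      gcongr
      exact (sqNorm_le_mul_supNorm_sq x).trans (by gcongr)
  refine (ENNReal.tsum_le_tsum finite_range).trans_eq ?_
  rw [ENNReal.tsum_mul_right, tsum_kernelE, one_mul]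

lemma sigma_pos (M : Model d c₀) (hc₀ : 0 < c₀) : 0 < M.sigma :=
  (mul_pos hc₀ (zero_lt_one.trans_le M.K.R_ge_one)).trans_le M.K.sigma_lower

end Kernel

section Moments

variable {M : Model d c₀}

lemma tsum_F (M : Model d c₀) (t : ℝ) : ∑' x, M.F t x = M.chi t := by
  rw [F_eq_conv, tsum_conv, tsum_kernelE, one_mul]
  rfl

lemma secondMoment_F (M : Model d c₀) (t : ℝ) : secondMoment (M.F t) =
    M.chi t * ENNReal.ofReal (M.sigma ^ 2) + secondMoment (M.G t) := by
  rw [F_eq_conv, secondMoment_conv _ (M.symm t).even, tsum_kernelE, secondMoment_kernelE, one_mul]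
  rfl

lemma tsum_G_mul_sqNormE_pow_lt_top (ht : t ∈ M.subcritical) (k : ℕ) :
    ∑' x, M.G t x * sqNormE x ^ k < ∞ := by
  obtain ⟨C, hC, c, hc, decay⟩ := M.expDecay ht.1 ht.2
  exact tsum_mul_sqNormE_pow_lt_top hC hc decay k

lemma tsum_errorE_mul_sqNormE_pow_lt_top (ht : t ∈ M.subcritical) (k : ℕ) :
    ∑' x, M.errorE t x * sqNormE x ^ k < ∞ := by
  obtain ⟨C, hC, c, hc, decay⟩ := M.H_expDecay ht.1 ht.2
  exact tsum_mul_sqNormE_pow_lt_top hC hc (fun x => ENNReal.ofReal_le_ofReal (decay x)) k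

lemma chi_lt_top (ht : t ∈ M.subcritical) : M.chi t < ∞ := by
  simpa only [pow_zero, mul_one] using! tsum_G_mul_sqNormE_pow_lt_top ht 0

lemma secondMoment_G_lt_top (ht : t ∈ M.subcritical) : secondMoment (M.G t) < ∞ := by
  simpa only [pow_one] using! tsum_G_mul_sqNormE_pow_lt_top ht 1

lemma tsum_errorE_lt_top (ht : t ∈ M.subcritical) : ∑' x, M.errorE t x < ∞ := by
  simpa only [pow_zero, mul_one] using tsum_errorE_mul_sqNormE_pow_lt_top ht 0

lemma secondMoment_errorE_lt_top (ht : t ∈ M.subcritical) : secondMoment (M.errorE t) < ∞ := by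
  simpa only [pow_one] using! tsum_errorE_mul_sqNormE_pow_lt_top ht 1

lemma secondMoment_F_lt_top (ht : t ∈ M.subcritical) : secondMoment (M.F t) < ∞ := by
  rw [secondMoment_F]
  exact ENNReal.add_lt_top.2
    ⟨ENNReal.mul_lt_top (chi_lt_top ht) ENNReal.ofReal_lt_top, secondMoment_G_lt_top ht⟩

lemma fourthMoment_F_lt_top (ht : t ∈ M.subcritical) : fourthMoment (M.F t) < ∞ := by
  rw [F_eq_conv]
  refine (fourthMoment_conv_le _ (M.symm t).even).trans_lt ?_
  rw [secondMoment_kernelE, tsum_kernelE, one_mul]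
  exact ENNReal.add_lt_top.2 ⟨ENNReal.add_lt_top.2
    ⟨ENNReal.mul_lt_top (chi_lt_top ht) (M.fourthMoment_kernelE_le.trans_lt ENNReal.ofReal_lt_top),
    ENNReal.mul_lt_top (ENNReal.mul_lt_top ENNReal.ofNat_lt_top (secondMoment_G_lt_top ht))
      ENNReal.ofReal_lt_top⟩, tsum_G_mul_sqNormE_pow_lt_top ht 2⟩

lemma G_le_G (ht : t ∈ M.subcritical) (hs : 0 ≤ s) (hst : s ≤ t) : M.G s ≤ M.G t := fun x =>
  M.mono x hs hst ht.2.le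

lemma F_le_F (ht : t ∈ M.subcritical) (hs : 0 ≤ s) (hst : s ≤ t) : M.F s ≤ M.F t := fun _ =>
  ENNReal.tsum_le_tsum fun _ => mul_le_mul_right (G_le_G ht hs hst _) _

lemma F_zero (M : Model d c₀) : M.F 0 = M.kernelE := by
  funext x
  simp only [F, M.init, mul_ite, mul_one, mul_zero]
  rw [tsum_eq_single x fun y hy => if_neg (sub_ne_zero.2 hy.symm), if_pos (sub_self x)]
  rfl

lemma chi_zero (M : Model d c₀) : M.chi 0 = 1 := by
  rw [← tsum_F, F_zero, tsum_kernelE]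

lemma F_le_add_conv (ht : t ∈ M.subcritical) (hs : 0 ≤ s) (hst : s ≤ t) (x : Fin d → ℤ) :
    M.F t x ≤ M.F s x + ENNReal.ofReal (t - s) * conv (M.F s) (M.F t) x := by
  have G_le (y : Fin d → ℤ) :
      M.G t y ≤ M.G s y + ENNReal.ofReal (t - s) * conv (M.G s) (M.F t) y := by
    rw [F_eq_conv, conv_conv_eq_tsum_prod]
    exact M.I1 hs hst ht.2 y
  calc M.F t x ≤ conv M.kernelE
        (fun y => M.G s y + ENNReal.ofReal (t - s) * conv (M.G s) (M.F t) y) x :=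
        ENNReal.tsum_le_tsum fun y => mul_le_mul_right (G_le (x - y)) _
    _ = _ := by rw [conv_add_const_mul, ← conv_assoc]; rfl

end Moments

section RealMoments

variable {M : Model d c₀}

/-- The susceptibility as a real number; meaningful for subcritical parameters only. -/
def chiReal (M : Model d c₀) (t : ℝ) : ℝ := (M.chi t).toReal

/-- The second moment of `F_t` as a real number; meaningful for subcritical parameters only. -/
def secondMomentReal (M : Model d c₀) (t : ℝ) : ℝ := (secondMoment (M.F t)).toReal

/-- The fourth moment of `F_t` as a real number; meaningful for subcritical parameters only. -/
def fourthMomentReal (M : Model d c₀) (t : ℝ) : ℝ := (fourthMoment (M.F t)).toReal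

lemma one_le_chiReal (ht : t ∈ M.subcritical) : 1 ≤ M.chiReal t := by
  have : M.chi 0 ≤ M.chi t := ENNReal.tsum_le_tsum (G_le_G ht le_rfl ht.1)
  simpa only [chi_zero, ENNReal.toReal_one] using! ENNReal.toReal_mono (chi_lt_top ht).ne this

lemma secondMomentReal_eq (ht : t ∈ M.subcritical) : M.secondMomentReal t =
    M.sigma ^ 2 * M.chiReal t + (secondMoment (M.G t)).toReal := by
  rw [secondMomentReal, secondMoment_F, ENNReal.toReal_add
    (ENNReal.mul_lt_top (chi_lt_top ht) ENNReal.ofReal_lt_top).ne (secondMoment_G_lt_top ht).ne,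
    ENNReal.toReal_mul, ENNReal.toReal_ofReal (sq_nonneg _), mul_comm]
  rfl

lemma secondMomentReal_pos (hc₀ : 0 < c₀) (ht : t ∈ M.subcritical) : 0 < M.secondMomentReal t := by
  rw [secondMomentReal_eq ht]
  have := M.sigma_pos hc₀
  have := one_le_chiReal ht
  positivity

lemma fourthMomentReal_pos (hc₀ : 0 < c₀) (ht : t ∈ M.subcritical) : 0 < M.fourthMomentReal t :=
  (secondMomentReal_pos hc₀ ht).trans_le
    (ENNReal.toReal_mono (fourthMoment_F_lt_top ht).ne (secondMoment_le_fourthMoment _))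

lemma xiSq_eq (M : Model d c₀) (t : ℝ) : M.xiSq t = secondMoment (M.F t) / M.chi t := by
  simp only [xiSq, secondMoment, sqNormE, mul_comm]

lemma toReal_xiSq (M : Model d c₀) (t : ℝ) :
    (M.xiSq t).toReal = M.secondMomentReal t / M.chiReal t := by
  rw [xiSq_eq, ENNReal.toReal_div]
  rfl

end RealMoments

section UpperBounds

variable {M : Model d c₀}

lemma chiReal_le (ht : t ∈ M.subcritical) (hs : 0 ≤ s) (hst : s ≤ t) :
    M.chiReal t ≤ M.chiReal s + (t - s) * (M.chiReal s * M.chiReal t) := by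
  have moment := tsum_mul_le_of_le_add_mul (F_le_add_conv ht hs hst) fun _ => 1
  simp only [mul_one, tsum_conv, tsum_F] at moment
  have hs' := mem_subcritical_of_le ht hs hst
  simpa only [ENNReal.toReal_mul] using! toReal_le_add_mul moment (sub_nonneg.2 hst)
    (chi_lt_top hs').ne (ENNReal.mul_lt_top (chi_lt_top hs') (chi_lt_top ht)).ne

lemma secondMomentReal_le (ht : t ∈ M.subcritical) (hs : 0 ≤ s) (hst : s ≤ t) :
    M.secondMomentReal t ≤ M.secondMomentReal s + (t - s) *
      (M.chiReal t * M.secondMomentReal s + M.chiReal s * M.secondMomentReal t) := by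
  have moment : secondMoment (M.F t) ≤ secondMoment (M.F s) + ENNReal.ofReal (t - s) *
      (M.chi t * secondMoment (M.F s) + M.chi s * secondMoment (M.F t)) := by
    refine (tsum_mul_le_of_le_add_mul (F_le_add_conv ht hs hst) sqNormE).trans_eq ?_
    rw [← secondMoment, ← secondMoment, secondMoment_conv _ (M.F_isSymmFun t).even, tsum_F, tsum_F]
  have hs' := mem_subcritical_of_le ht hs hst
  have first := ENNReal.mul_lt_top (chi_lt_top ht) (secondMoment_F_lt_top hs')
  have second := ENNReal.mul_lt_top (chi_lt_top hs') (secondMoment_F_lt_top ht)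
  simpa only [ENNReal.toReal_add first.ne second.ne, ENNReal.toReal_mul] using!
    toReal_le_add_mul moment (sub_nonneg.2 hst) (secondMoment_F_lt_top hs').ne
      (ENNReal.add_lt_top.2 ⟨first, second⟩).ne

lemma fourthMomentReal_le (ht : t ∈ M.subcritical) (hs : 0 ≤ s) (hst : s ≤ t) :
    M.fourthMomentReal t ≤ M.fourthMomentReal s + (t - s) * (M.chiReal t * M.fourthMomentReal s +
      6 * M.secondMomentReal t * M.secondMomentReal s + M.chiReal s * M.fourthMomentReal t) := by
  have moment : fourthMoment (M.F t) ≤ fourthMoment (M.F s) + ENNReal.ofReal (t - s) *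
      (M.chi t * fourthMoment (M.F s) + 6 * secondMoment (M.F t) * secondMoment (M.F s) +
        M.chi s * fourthMoment (M.F t)) := by
    refine (tsum_mul_le_of_le_add_mul (F_le_add_conv ht hs hst) (sqNormE · ^ 2)).trans ?_
    have := fourthMoment_conv_le (M.F s) (M.F_isSymmFun t).even
    rw [tsum_F, tsum_F] at this
    gcongr
    · rfl
    · exact this
  have hs' := mem_subcritical_of_le ht hs hst
  have first := ENNReal.mul_lt_top (chi_lt_top ht) (fourthMoment_F_lt_top hs')
  have second := ENNReal.mul_lt_top
    (ENNReal.mul_lt_top (ENNReal.ofNat_lt_top (n := 6)) (secondMoment_F_lt_top ht))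
    (secondMoment_F_lt_top hs')
  have third := ENNReal.mul_lt_top (chi_lt_top hs') (fourthMoment_F_lt_top ht)
  have sum := ENNReal.add_lt_top.2 ⟨first, second⟩
  simpa only [ENNReal.toReal_add sum.ne third.ne, ENNReal.toReal_add first.ne second.ne,
    ENNReal.toReal_mul, ENNReal.toReal_ofNat] using!
    toReal_le_add_mul moment (sub_nonneg.2 hst) (fourthMoment_F_lt_top hs').ne
      (ENNReal.add_lt_top.2 ⟨sum, third⟩).ne

end UpperBounds

section LowerBounds

variable {M : Model d c₀}

lemma hasSum_toReal_conv_conv_G (ht : t ∈ M.subcritical) {k : (Fin d → ℤ) → ℝ≥0∞}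
    (hk : ∑' x, k x < ∞) (x : Fin d → ℤ) : HasSum (fun p : (Fin d → ℤ) × (Fin d → ℤ) =>
        (M.G t p.1).toReal * (k p.2).toReal * (M.G t (x - p.1 - p.2)).toReal)
      (conv (M.G t) (conv k (M.G t)) x).toReal := by
  have finite : conv (M.G t) (conv k (M.G t)) x < ∞ := by
    refine (ENNReal.le_tsum x).trans_lt ?_
    rw [tsum_conv, tsum_conv]
    exact ENNReal.mul_lt_top (chi_lt_top ht) (ENNReal.mul_lt_top hk (chi_lt_top ht))
  rw [conv_conv_eq_tsum_prod] at finite ⊢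
  simpa only [ENNReal.toReal_mul] using! hasSum_toReal finite.ne

lemma toReal_conv_kernelE_sub_errorE_le (ht : t ∈ M.subcritical) (x : Fin d → ℤ) :
    (conv (M.G t) (conv M.kernelE (M.G t)) x).toReal -
      (conv (M.G t) (conv (M.errorE t) (M.G t)) x).toReal ≤ M.G' t x := by
  have kernel_finite : ∑' x, M.kernelE x < ∞ := by rw [tsum_kernelE]; exact ENNReal.one_lt_top
  have difference := (hasSum_toReal_conv_conv_G ht kernel_finite x).sub
    (hasSum_toReal_conv_conv_G ht (tsum_errorE_lt_top ht) x)
  rw [← difference.tsum_eq]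
  refine (tsum_congr fun p => ?_).trans_le (M.I2 ht.1 ht.2 x)
  rw [kernelE, errorE, ENNReal.toReal_ofReal (M.K.nonneg _), ENNReal.toReal_ofReal (M.H_nonneg _ _)]
  ring

lemma hasRightDiniLE_neg_tsum_G_mul (hb : b ∈ M.subcritical) (h0 : 0 ≤ t) (htb : t < b)
    {a : (Fin d → ℤ) → ℝ≥0∞} (ha : ∀ x, a x ≠ ∞) (hG : ∑' x, M.G b x * a x < ∞)
    (hJ : ∑' x, conv (M.G t) (conv M.kernelE (M.G t)) x * a x < ∞)
    (hH : ∑' x, conv (M.G t) (conv (M.errorE t) (M.G t)) x * a x < ∞) :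
    HasRightDiniLE (fun s => -(∑' x, M.G s x * a x).toReal)
      (-((∑' x, conv (M.G t) (conv M.kernelE (M.G t)) x * a x).toReal -
        (∑' x, conv (M.G t) (conv (M.errorE t) (M.G t)) x * a x).toReal)) t := by
  have ht := mem_subcritical_of_le hb h0 htb.le
  have near : ∀ᶠ s in 𝓝[>] t, t ≤ s ∧ s ≤ b := mem_of_superset (Ioo_mem_nhdsGT htb)
    Ioo_subset_Icc_self
  have hasSum (s : ℝ) (hs : 0 ≤ s) (hsb : s ≤ b) :
      HasSum (fun x => (M.G s x * a x).toReal) (∑' x, M.G s x * a x).toReal :=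
    hasSum_toReal ((ENNReal.tsum_le_tsum fun x =>
      mul_le_mul_left (G_le_G hb hs hsb x) _).trans_lt hG).ne
  refine HasRightDiniLE.neg_of_hasSum (F := fun s x => (M.G s x * a x).toReal)
    (φ := fun s => (∑' x, M.G s x * a x).toReal) (F' := fun x => M.G' t x * (a x).toReal)
    ?_ ?_ (hasSum t h0 htb.le) (fun x => ?_) (fun x => ?_)
    ((hasSum_toReal hJ.ne).sub (hasSum_toReal hH.ne))
  · filter_upwards [near] with s hs x
    refine ENNReal.toReal_mono (ENNReal.mul_ne_top ?_ (ha x))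
      (mul_le_mul_left (G_le_G (mem_subcritical_of_le hb (h0.trans hs.1) hs.2) h0 hs.1 x) _)
    exact ENNReal.ne_top_of_tsum_ne_top
      (chi_lt_top (mem_subcritical_of_le hb (h0.trans hs.1) hs.2)).ne x
  · filter_upwards [near] with s hs using hasSum s (h0.trans hs.1) hs.2
  · simp only [ENNReal.toReal_mul]
    exact ((M.deriv x h0 ht.2).mono fun s hs => h0.trans (le_of_lt hs)).mul_const _
  · simp only [ENNReal.toReal_mul, ← sub_mul]
    exact mul_le_mul_of_nonneg_right (toReal_conv_kernelE_sub_errorE_le ht x)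
      ENNReal.toReal_nonneg

lemma secondMoment_conv_conv_G (M : Model d c₀) {k : (Fin d → ℤ) → ℝ≥0∞} (hk : k.Even) :
    secondMoment (conv (M.G t) (conv k (M.G t))) =
      M.chi t ^ 2 * secondMoment k + 2 * (M.chi t * (∑' x, k x) * secondMoment (M.G t)) := by
  have hG := (M.symm t).even
  rw [secondMoment_conv _ (conv_even hk hG), secondMoment_conv _ hG, tsum_conv]
  change (∑' x, k x) * M.chi t * _ + M.chi t * (M.chi t * _ + _) = _
  ring

lemma toReal_secondMoment_conv_conv_G (M : Model d c₀) {k : (Fin d → ℤ) → ℝ≥0∞} (hk : k.Even)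
    (hfin : secondMoment (conv (M.G t) (conv k (M.G t))) < ∞) :
    (secondMoment (conv (M.G t) (conv k (M.G t)))).toReal =
      M.chiReal t ^ 2 * (secondMoment k).toReal +
        2 * (M.chiReal t * (∑' x, k x).toReal * (secondMoment (M.G t)).toReal) := by
  rw [secondMoment_conv_conv_G M hk] at hfin ⊢
  have := ENNReal.add_lt_top.1 hfin
  simp only [ENNReal.toReal_add this.1.ne this.2.ne, ENNReal.toReal_mul, ENNReal.toReal_pow,
    ENNReal.toReal_ofNat]
  rfl

lemma tsum_conv_conv_G (M : Model d c₀) (t : ℝ) (k : (Fin d → ℤ) → ℝ≥0∞) :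
    ∑' x, conv (M.G t) (conv k (M.G t)) x = M.chi t ^ 2 * ∑' x, k x := by
  rw [tsum_conv, tsum_conv]
  change M.chi t * (_ * M.chi t) = _
  ring

lemma hasRightDiniLE_neg_chiReal (hb : b ∈ M.subcritical) (h0 : 0 ≤ t) (htb : t < b) :
    HasRightDiniLE (fun s => -M.chiReal s)
      (-(M.chiReal t ^ 2 * (1 - (∑' x, M.errorE t x).toReal))) t := by
  have ht := mem_subcritical_of_le hb h0 htb.le
  have hχ := ENNReal.pow_lt_top (chi_lt_top ht) (n := 2)
  have dini := hasRightDiniLE_neg_tsum_G_mul hb h0 htb (a := fun _ => 1) (by simp)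
    (by simpa only [mul_one] using! chi_lt_top hb)
    (by simpa only [mul_one, tsum_conv_conv_G, tsum_kernelE] using hχ)
    (by simpa only [mul_one, tsum_conv_conv_G] using ENNReal.mul_lt_top hχ (tsum_errorE_lt_top ht))
  simp only [mul_one, tsum_conv_conv_G, tsum_kernelE, ENNReal.toReal_mul, ENNReal.toReal_pow]
    at dini
  rwa [← mul_one_sub] at dini

lemma hasRightDiniLE_neg_secondMoment_G (hb : b ∈ M.subcritical) (h0 : 0 ≤ t) (htb : t < b) :
    HasRightDiniLE (fun s => -(secondMoment (M.G s)).toReal)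
      (-(M.chiReal t ^ 2 * M.sigma ^ 2 + 2 * (M.chiReal t * (secondMoment (M.G t)).toReal) -
        (M.chiReal t ^ 2 * (secondMoment (M.errorE t)).toReal +
          2 * (M.chiReal t * (∑' x, M.errorE t x).toReal * (secondMoment (M.G t)).toReal)))) t := by
  have ht := mem_subcritical_of_le hb h0 htb.le
  have finite {k : (Fin d → ℤ) → ℝ≥0∞} (hk : k.Even) (hk₀ : ∑' x, k x < ∞)
      (hk₂ : secondMoment k < ∞) : secondMoment (conv (M.G t) (conv k (M.G t))) < ∞ := by
    rw [secondMoment_conv_conv_G M hk]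
    exact ENNReal.add_lt_top.2
      ⟨ENNReal.mul_lt_top (ENNReal.pow_lt_top (chi_lt_top ht)) hk₂,
        ENNReal.mul_lt_top ENNReal.ofNat_lt_top (ENNReal.mul_lt_top
          (ENNReal.mul_lt_top (chi_lt_top ht) hk₀) (secondMoment_G_lt_top ht))⟩
  have finite_kernel := finite M.kernelE_isSymmFun.even (by rw [tsum_kernelE]; simp)
    (by rw [secondMoment_kernelE]; exact ENNReal.ofReal_lt_top)
  have finite_error := finite (M.errorE_even t) (tsum_errorE_lt_top ht)
    (secondMoment_errorE_lt_top ht)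
  have dini : HasRightDiniLE (fun s => -(secondMoment (M.G s)).toReal)
      (-((secondMoment (conv (M.G t) (conv M.kernelE (M.G t)))).toReal -
        (secondMoment (conv (M.G t) (conv (M.errorE t) (M.G t)))).toReal)) t :=
    hasRightDiniLE_neg_tsum_G_mul hb h0 htb (fun _ => ENNReal.ofReal_ne_top)
      (secondMoment_G_lt_top hb) finite_kernel finite_error
  rwa [toReal_secondMoment_conv_conv_G M M.kernelE_isSymmFun.even finite_kernel,
    toReal_secondMoment_conv_conv_G M (M.errorE_even t) finite_error, tsum_kernelE,
    secondMoment_kernelE, ENNReal.toReal_ofReal (sq_nonneg _), ENNReal.toReal_one, mul_one] at dini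

lemma tsum_errorE (ht : t ∈ M.subcritical) :
    ∑' x, M.errorE t x = ENNReal.ofReal (∑' x, M.H t x) := by
  have sum := hasSum_toReal (tsum_errorE_lt_top ht).ne
  simp only [errorE, ENNReal.toReal_ofReal (M.H_nonneg _ _)] at sum
  rw [sum.tsum_eq]
  exact (ENNReal.ofReal_toReal (tsum_errorE_lt_top ht).ne).symm

lemma secondMoment_errorE (ht : t ∈ M.subcritical) :
    secondMoment (M.errorE t) = ENNReal.ofReal (∑' x, sqNorm x * M.H t x) := by
  have sum := hasSum_toReal (secondMoment_errorE_lt_top ht).ne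
  simp only [errorE, sqNormE, ENNReal.toReal_mul, ENNReal.toReal_ofReal (M.H_nonneg _ _),
    ENNReal.toReal_ofReal (sqNorm_nonneg _), mul_comm (M.H _ _)] at sum
  rw [sum.tsum_eq]
  exact (ENNReal.ofReal_toReal (secondMoment_errorE_lt_top ht).ne).symm

lemma error_mul_secondMomentReal_le (hc₀ : 0 < c₀) (hδ : 0 < δ) (hb : b ∈ M.subcritical)
    (hE : M.E b < ENNReal.ofReal δ) (h0 : 0 ≤ t) (htb : t ≤ b) :
    (∑' x, M.errorE t x).toReal * M.secondMomentReal t +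
      M.chiReal t * (secondMoment (M.errorE t)).toReal ≤ δ * M.secondMomentReal t := by
  have ht := mem_subcritical_of_le hb h0 htb
  have hV := secondMomentReal_pos hc₀ ht
  have mass_finite := tsum_errorE_lt_top ht
  have bound : ∑' x, M.errorE t x + secondMoment (M.errorE t) / M.xiSq t ≤ ENNReal.ofReal δ := by
    rw [tsum_errorE ht, secondMoment_errorE ht]
    exact (le_iSup₂ (f := fun t (_ : t ∈ Icc 0 b) => ENNReal.ofReal (∑' x, M.H t x) +
      ENNReal.ofReal (∑' x, sqNorm x * M.H t x) / M.xiSq t) t ⟨h0, htb⟩).trans hE.le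
  have quotient_finite : secondMoment (M.errorE t) / M.xiSq t ≠ ∞ :=
    ((le_add_self.trans bound).trans_lt ENNReal.ofReal_lt_top).ne
  have bound := ENNReal.toReal_mono ENNReal.ofReal_ne_top bound
  rw [ENNReal.toReal_add mass_finite.ne quotient_finite, ENNReal.toReal_ofReal hδ.le,
    ENNReal.toReal_div, toReal_xiSq, div_div_eq_mul_div] at bound
  have := mul_le_mul_of_nonneg_right bound hV.le
  rw [add_mul, div_mul_cancel₀ _ hV.ne'] at this
  linarith

lemma hasRightDiniLE_neg_chiReal_of_E_lt (hc₀ : 0 < c₀) (hδ : 0 < δ) (hb : b ∈ M.subcritical)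
    (hE : M.E b < ENNReal.ofReal δ) (ht : t ∈ Ico 0 b) :
    HasRightDiniLE (fun s => -M.chiReal s) (-((1 - δ) * M.chiReal t ^ 2)) t := by
  have hV := secondMomentReal_pos hc₀ (mem_subcritical_of_le hb ht.1 ht.2.le)
  have error := error_mul_secondMomentReal_le hc₀ hδ hb hE ht.1 ht.2.le
  have : 0 ≤ M.chiReal t * (secondMoment (M.errorE t)).toReal :=
    mul_nonneg ENNReal.toReal_nonneg ENNReal.toReal_nonneg
  have mass_le : (∑' x, M.errorE t x).toReal ≤ δ := le_of_mul_le_mul_right (by linarith) hV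
  refine (hasRightDiniLE_neg_chiReal hb ht.1 ht.2).mono (neg_le_neg ?_)
  rw [mul_comm]
  gcongr

lemma hasRightDiniLE_neg_secondMomentReal (hc₀ : 0 < c₀) (hδ : 0 < δ) (hb : b ∈ M.subcritical)
    (hE : M.E b < ENNReal.ofReal δ) (ht : t ∈ Ico 0 b) :
    HasRightDiniLE (fun s => -M.secondMomentReal s)
      (-((2 - 2 * δ) * (M.chiReal t * M.secondMomentReal t))) t := by
  have ht' := mem_subcritical_of_le hb ht.1 ht.2.le
  have dini := ((hasRightDiniLE_neg_chiReal hb ht.1 ht.2).const_mul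
    (sq_pos_of_pos (M.sigma_pos hc₀))).add (hasRightDiniLE_neg_secondMoment_G hb ht.1 ht.2)
  have decomposition {s : ℝ} (hs : s ∈ M.subcritical) : M.sigma ^ 2 * -M.chiReal s +
      -(secondMoment (M.G s)).toReal = -M.secondMomentReal s := by
    rw [secondMomentReal_eq hs]; ring
  refine (dini.congr ?_ (decomposition ht')).mono ?_
  · filter_upwards [Ioo_mem_nhdsGT ht.2] with s hs
    exact decomposition (mem_subcritical_of_le hb (ht.1.trans hs.1.le) hs.2.le)
  have error := error_mul_secondMomentReal_le hc₀ hδ hb hE ht.1 ht.2.le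
  have hχ := zero_lt_one.trans_le (one_le_chiReal ht')
  have hσ : M.sigma ^ 2 * M.chiReal t = M.secondMomentReal t - (secondMoment (M.G t)).toReal := by
    rw [secondMomentReal_eq ht']; ring
  have m_nonneg : 0 ≤ (∑' x, M.errorE t x).toReal := ENNReal.toReal_nonneg
  have h_nonneg : 0 ≤ M.chiReal t * (secondMoment (M.errorE t)).toReal :=
    mul_nonneg hχ.le ENNReal.toReal_nonneg
  have G_le_F : (secondMoment (M.G t)).toReal ≤ M.secondMomentReal t := by
    rw [← sub_nonneg, ← hσ]; positivity
  generalize (∑' x, M.errorE t x).toReal = m at *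
  generalize (secondMoment (M.errorE t)).toReal = h at *
  generalize (secondMoment (M.G t)).toReal = g at *
  generalize M.secondMomentReal t = V at *
  generalize M.chiReal t = χ at *
  have total_error : χ * (m * V + m * g + χ * h) ≤ χ * (2 * (δ * V)) := by
    refine mul_le_mul_of_nonneg_left ?_ hχ.le
    linarith [mul_le_mul_of_nonneg_left G_le_F m_nonneg]
  linear_combination total_error - (2 * χ - χ * m) * hσ

end LowerBounds

lemma fourthMomentReal_zero_le (M : Model d c₀) (hc₀ : 0 < c₀) :
    M.fourthMomentReal 0 * M.chiReal 0 ≤ kurtosisBound d c₀ * M.secondMomentReal 0 ^ 2 := by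
  have hR := M.K.R_ge_one
  have fourth : M.fourthMomentReal 0 ≤ (d * M.K.R ^ 2) ^ 2 := by
    rw [fourthMomentReal, F_zero]
    exact ENNReal.toReal_le_of_le_ofReal (by positivity) M.fourthMoment_kernelE_le
  rw [chiReal, chi_zero, ENNReal.toReal_one, mul_one, secondMomentReal, F_zero,
    secondMoment_kernelE, ENNReal.toReal_ofReal (sq_nonneg _)]
  calc M.fourthMomentReal 0 ≤ d ^ 2 / c₀ ^ 4 * ((c₀ * M.K.R) ^ 2) ^ 2 :=
        fourth.trans_eq (by field_simp)
    _ ≤ kurtosisBound d c₀ * (M.sigma ^ 2) ^ 2 := by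
        gcongr
        · linarith [ten_lt_kurtosisBound d c₀]
        · rw [kurtosisBound]; linarith
        · exact M.K.sigma_lower

lemma momentSystem (M : Model d c₀) (hc₀ : 0 < c₀) (hδ : 0 < δ) (hδ' : δ ≤ 1 / 10)
    (hb : b ∈ M.subcritical) (hE : M.E b < ENNReal.ofReal δ) :
    MomentSystem M.chiReal M.secondMomentReal M.fourthMomentReal b δ := by
  have sub {t : ℝ} (ht : t ∈ Icc 0 b) : t ∈ M.subcritical := mem_subcritical_of_le hb ht.1 ht.2
  have upto {s t : ℝ} (hs : 0 ≤ s) (hst : s ≤ t) (htb : t ≤ b) : t ∈ M.subcritical :=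
    sub ⟨hs.trans hst, htb⟩
  exact {
    le_tenth := hδ'
    chi_pos := fun t ht => zero_lt_one.trans_le (one_le_chiReal (sub ht))
    V_pos := fun t ht => secondMomentReal_pos hc₀ (sub ht)
    U_pos := fun t ht => fourthMomentReal_pos hc₀ (sub ht)
    chi_mono := fun s hs t ht hst => ENNReal.toReal_mono (chi_lt_top (sub ht)).ne
      (ENNReal.tsum_le_tsum (G_le_G (sub ht) hs.1 hst))
    V_mono := fun s hs t ht hst => ENNReal.toReal_mono (secondMoment_F_lt_top (sub ht)).ne
      (ENNReal.tsum_le_tsum fun x => mul_le_mul_left (F_le_F (sub ht) hs.1 hst x) _)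
    U_mono := fun s hs t ht hst => ENNReal.toReal_mono (fourthMoment_F_lt_top (sub ht)).ne
      (ENNReal.tsum_le_tsum fun x => mul_le_mul_left (F_le_F (sub ht) hs.1 hst x) _)
    chi_le := fun s t hs hst ht => chiReal_le (upto hs hst ht) hs hst
    V_le := fun s t hs hst ht => secondMomentReal_le (upto hs hst ht) hs hst
    U_le := fun s t hs hst ht => fourthMomentReal_le (upto hs hst ht) hs hst
    chi_dini := fun t ht => hasRightDiniLE_neg_chiReal_of_E_lt hc₀ hδ hb hE ht
    V_dini := fun t ht => hasRightDiniLE_neg_secondMomentReal hc₀ hδ hb hE ht }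

end Model

section CharacteristicFunction

variable {d : ℕ} {p : (Fin d → ℤ) → ℝ≥0∞} {X B : ℝ}

lemma abs_apply_mul_apply_le_sqNorm (x : Fin d → ℤ) (i j : Fin d) :
    |(x i : ℝ) * x j| ≤ sqNorm x := by
  have coordinate (k : Fin d) : (x k : ℝ) ^ 2 ≤ sqNorm x :=
    Finset.single_le_sum (f := fun k => (x k : ℝ) ^ 2) (fun _ _ => sq_nonneg _) (Finset.mem_univ k)
  rw [abs_le]
  constructor <;> nlinarith [coordinate i, coordinate j, sq_nonneg ((x i : ℝ) + x j),
    sq_nonneg ((x i : ℝ) - x j)]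

/-- The linear functional `x ↦ θ · x` on the lattice, the phase of the character with
frequency `θ`. -/
def phase (θ : Fin d → ℝ) : (Fin d → ℤ) →+ ℝ where
  toFun x := ∑ i, θ i * x i
  map_zero' := by simp
  map_add' x y := by simp [mul_add, Finset.sum_add_distrib]

lemma phase_apply (θ : Fin d → ℝ) (x : Fin d → ℤ) : phase θ x = ∑ i, θ i * x i := rfl

lemma phase_sub (θ θ' : Fin d → ℝ) (x : Fin d → ℤ) :
    phase (θ - θ') x = phase θ x - phase θ' x := by
  simp only [phase_apply, Pi.sub_apply, sub_mul, Finset.sum_sub_distrib]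

lemma phase_sq_le (θ : Fin d → ℝ) (x : Fin d → ℤ) :
    phase θ x ^ 2 ≤ (∑ i, θ i ^ 2) * sqNorm x :=
  Finset.sum_mul_sq_le_sq_mul_sq Finset.univ θ fun i => (x i : ℝ)

lemma sum_sq_nonneg (θ : Fin d → ℝ) : 0 ≤ ∑ i, θ i ^ 2 := Finset.sum_nonneg fun _ _ => sq_nonneg _

lemma cos_le_one_sub_add_pow_four (u : ℝ) : Real.cos u ≤ 1 - u ^ 2 / 2 + u ^ 4 / 2 := by
  by_cases h : |u| ≤ 1
  · have taylor := (abs_le.1 (Real.cos_bound h)).2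
    rw [Even.pow_abs ⟨2, rfl⟩] at taylor
    nlinarith [sq_nonneg (u ^ 2)]
  · have large : 1 < u ^ 2 := (one_lt_sq_iff_one_lt_abs u).2 (not_le.1 h)
    nlinarith [Real.cos_le_one u]

/-- A symmetric step distribution on `ℤ^d` with second moment `X` and with fourth moment at
most `B X²`. -/
structure StepLaw (p : (Fin d → ℤ) → ℝ≥0∞) (X B : ℝ) : Prop where
  symm : IsSymmFun p
  tsum_eq_one : ∑' x, p x = 1
  variance_pos : 0 < X
  one_le_kurtosis : 1 ≤ B
  secondMoment_eq : secondMoment p = ENNReal.ofReal X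
  fourthMoment_le : fourthMoment p ≤ ENNReal.ofReal (B * X ^ 2)

/-- The characteristic function of a step distribution that is invariant under `x ↦ -x`, so that
only the cosines contribute. -/
def charFn (p : (Fin d → ℤ) → ℝ≥0∞) (θ : Fin d → ℝ) : ℝ :=
  ∑' y, (p y).toReal * Real.cos (phase θ y)

namespace StepLaw

lemma ne_top (L : StepLaw p X B) (y : Fin d → ℤ) : p y ≠ ∞ :=
  ENNReal.ne_top_of_tsum_ne_top (L.tsum_eq_one ▸ ENNReal.one_ne_top) y

lemma hasSum_one (L : StepLaw p X B) : HasSum (fun y => (p y).toReal) 1 := by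
  simpa only [L.tsum_eq_one, ENNReal.toReal_one] using
    hasSum_toReal (L.tsum_eq_one.trans_ne ENNReal.one_ne_top)

lemma hasSum_sqNorm (L : StepLaw p X B) : HasSum (fun y => (p y).toReal * sqNorm y) X := by
  have second := hasSum_toReal (f := fun y => p y * sqNormE y)
    (L.secondMoment_eq.trans_ne ENNReal.ofReal_ne_top)
  rw [← secondMoment, L.secondMoment_eq, ENNReal.toReal_ofReal L.variance_pos.le] at second
  simpa only [ENNReal.toReal_mul, sqNormE, ENNReal.toReal_ofReal (sqNorm_nonneg _)] using second

lemma exists_hasSum_sqNorm_sq (L : StepLaw p X B) :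
    ∃ m ≤ B * X ^ 2, HasSum (fun y => (p y).toReal * sqNorm y ^ 2) m := by
  have hB := L.one_le_kurtosis
  refine ⟨_, ENNReal.toReal_le_of_le_ofReal (by positivity) L.fourthMoment_le, ?_⟩
  rw [fourthMoment]
  have fourth := hasSum_toReal (f := fun y => p y * sqNormE y ^ 2)
    (L.fourthMoment_le.trans_lt ENNReal.ofReal_lt_top).ne
  simpa only [ENNReal.toReal_mul, ENNReal.toReal_pow, sqNormE,
    ENNReal.toReal_ofReal (sqNorm_nonneg _)] using fourth

lemma summable_mul_of_abs_le (L : StepLaw p X B) {u : (Fin d → ℤ) → ℝ} {C : ℝ}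
    (hu : ∀ y, |u y| ≤ C) : Summable fun y => (p y).toReal * u y := by
  refine .of_norm_bounded (L.hasSum_one.summable.mul_right C) fun y => ?_
  rw [Real.norm_eq_abs, abs_mul, abs_of_nonneg ENNReal.toReal_nonneg]
  exact mul_le_mul_of_nonneg_left (hu y) ENNReal.toReal_nonneg

lemma summable_covariance (L : StepLaw p X B) (i j : Fin d) :
    Summable fun y => (p y).toReal * ((y i : ℝ) * y j) := by
  refine .of_norm_bounded L.hasSum_sqNorm.summable fun y => ?_
  rw [Real.norm_eq_abs, abs_mul, abs_of_nonneg ENNReal.toReal_nonneg]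
  exact mul_le_mul_of_nonneg_left (abs_apply_mul_apply_le_sqNorm y i j) ENNReal.toReal_nonneg

lemma tsum_signedPerm (L : StepLaw p X B) (π : Equiv.Perm (Fin d)) (e : Fin d → Bool)
    (u : (Fin d → ℤ) → ℝ) :
    ∑' y, (p y).toReal * u (signedPerm π e y) = ∑' y, (p y).toReal * u y := by
  rw [← (signedPerm π e).toEquiv.tsum_eq fun y => (p y).toReal * u y]
  exact tsum_congr fun y => by rw [← L.symm π e y]; rfl

lemma covariance_eq_zero (L : StepLaw p X B) {i j : Fin d} (hij : i ≠ j) :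
    ∑' y, (p y).toReal * ((y i : ℝ) * y j) = 0 := by
  have reflect := L.tsum_signedPerm 1 (fun k => decide (k = i)) fun y => (y i : ℝ) * y j
  have negate (y : Fin d → ℤ) : (signedPerm 1 (fun k => decide (k = i)) y i : ℝ) *
      signedPerm 1 (fun k => decide (k = i)) y j = -((y i : ℝ) * y j) := by
    simp [signedPerm, hij.symm]
  simp only [negate, mul_neg, tsum_neg] at reflect
  linarith

lemma variance_apply (L : StepLaw p X B) (i : Fin d) :
    ∑' y, (p y).toReal * ((y i : ℝ) * y i) = X / d := by
  have swap (j : Fin d) : ∑' y, (p y).toReal * ((y j : ℝ) * y j) =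
      ∑' y, (p y).toReal * ((y i : ℝ) * y i) := by
    simpa [signedPerm] using
      (L.tsum_signedPerm (Equiv.swap i j) (fun _ => false) fun y => (y i : ℝ) * y i)
  have trace : ∑ j : Fin d, ∑' y, (p y).toReal * ((y j : ℝ) * y j) = X := by
    rw [← Summable.tsum_finsetSum fun j _ => L.summable_covariance j j, ← L.hasSum_sqNorm.tsum_eq]
    simp only [← Finset.mul_sum, sqNorm, sq]
  simp only [swap, Finset.sum_const, Finset.card_univ, Fintype.card_fin, nsmul_eq_mul] at trace
  have hd : (d : ℝ) ≠ 0 := Nat.cast_ne_zero.2 i.pos.ne'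
  rw [eq_div_iff hd, mul_comm, trace]

lemma hasSum_phase_sq (L : StepLaw p X B) (θ : Fin d → ℝ) :
    HasSum (fun y => (p y).toReal * phase θ y ^ 2) ((∑ i, θ i ^ 2) * (X / d)) := by
  have expand (y : Fin d → ℤ) : (p y).toReal * phase θ y ^ 2 =
      ∑ i, ∑ j, θ i * θ j * ((p y).toReal * ((y i : ℝ) * y j)) := by
    rw [phase_apply, sq, Finset.sum_mul_sum, Finset.mul_sum]
    refine Finset.sum_congr rfl fun i _ => ?_
    rw [Finset.mul_sum]
    exact Finset.sum_congr rfl fun j _ => by ring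
  have covariance (i j : Fin d) : HasSum (fun y : Fin d → ℤ =>
      θ i * θ j * ((p y).toReal * ((y i : ℝ) * y j))) (if i = j then θ i ^ 2 * (X / d) else 0) := by
    have := (L.summable_covariance i j).hasSum.mul_left (θ i * θ j)
    split_ifs with hij
    · subst hij
      simpa only [L.variance_apply, sq] using this
    · rwa [L.covariance_eq_zero hij, mul_zero] at this
  simp only [expand, Finset.sum_mul]
  simpa using hasSum_sum fun i (_ : i ∈ Finset.univ) =>
    hasSum_sum fun j (_ : j ∈ Finset.univ) => covariance i j

lemma hasSum_cos (L : StepLaw p X B) (θ : Fin d → ℝ) :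
    HasSum (fun y => (p y).toReal * Real.cos (phase θ y)) (charFn p θ) :=
  (L.summable_mul_of_abs_le fun _ => Real.abs_cos_le_one _).hasSum

lemma hasSum_sin (L : StepLaw p X B) (θ : Fin d → ℝ) :
    HasSum (fun y => (p y).toReal * Real.sin (phase θ y)) 0 := by
  have summable := L.summable_mul_of_abs_le fun y => Real.abs_sin_le_one (phase θ y)
  have odd := (Equiv.neg (Fin d → ℤ)).tsum_eq fun y => (p y).toReal * Real.sin (phase θ y)
  simp only [Equiv.neg_apply, L.symm.even _, map_neg, Real.sin_neg, mul_neg, tsum_neg] at odd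
  exact (by linarith : ∑' y, (p y).toReal * Real.sin (phase θ y) = 0) ▸ summable.hasSum

lemma one_sub_le_charFn (L : StepLaw p X B) (θ : Fin d → ℝ) :
    1 - (∑ i, θ i ^ 2) * (X / d) * (1 / 2) ≤ charFn p θ := by
  refine hasSum_le (fun y => ?_) (L.hasSum_one.sub ((L.hasSum_phase_sq θ).mul_right (1 / 2)))
    (L.hasSum_cos θ)
  have := mul_le_mul_of_nonneg_left (Real.one_sub_sq_div_two_le_cos (x := phase θ y))
    (ENNReal.toReal_nonneg (a := p y))
  linarith

lemma charFn_le_one_sub_add (L : StepLaw p X B) (θ : Fin d → ℝ) :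
    charFn p θ ≤ 1 - (∑ i, θ i ^ 2) * (X / d) * (1 / 2) +
      B * ((∑ i, θ i ^ 2) * X) ^ 2 * (1 / 2) := by
  obtain ⟨m, hm, fourth⟩ := L.exists_hasSum_sqNorm_sq
  have bound : charFn p θ ≤ 1 - (∑ i, θ i ^ 2) * (X / d) * (1 / 2) +
      m * ((∑ i, θ i ^ 2) ^ 2 * (1 / 2)) := by
    refine hasSum_le (fun y => ?_) (L.hasSum_cos θ)
      ((L.hasSum_one.sub ((L.hasSum_phase_sq θ).mul_right (1 / 2))).add (fourth.mul_right _))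
    have cauchy_schwarz := pow_le_pow_left₀ (sq_nonneg _) (phase_sq_le θ y) 2
    have := mul_le_mul_of_nonneg_left ((cos_le_one_sub_add_pow_four (phase θ y)).trans
      (by linarith : _ ≤ 1 - phase θ y ^ 2 / 2 + ((∑ i, θ i ^ 2) * sqNorm y) ^ 2 / 2))
      (ENNReal.toReal_nonneg (a := p y))
    linarith
  have := mul_le_mul_of_nonneg_right hm
    (by positivity : 0 ≤ (∑ i, θ i ^ 2) ^ 2 * (1 / 2 : ℝ))
  linarith

lemma charFn_nonneg (L : StepLaw p X B) (hd : 0 < d) {θ : Fin d → ℝ}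
    (hθ : 2 * d * B * ((∑ i, θ i ^ 2) * X) ≤ 1) : 0 ≤ charFn p θ := by
  have hB := L.one_le_kurtosis
  have hd' : (1 : ℝ) ≤ d := by exact_mod_cast hd
  have nonneg : 0 ≤ (∑ i, θ i ^ 2) * X := mul_nonneg (sum_sq_nonneg θ) L.variance_pos.le
  have small : (∑ i, θ i ^ 2) * X ≤ 1 := by
    nlinarith [mul_le_mul_of_nonneg_right (one_le_mul_of_one_le_of_one_le hd' hB) nonneg]
  have : (∑ i, θ i ^ 2) * (X / d) ≤ (∑ i, θ i ^ 2) * X :=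
    mul_le_mul_of_nonneg_left (div_le_self L.variance_pos.le hd') (sum_sq_nonneg θ)
  linarith [L.one_sub_le_charFn θ]

lemma charFn_le_exp (L : StepLaw p X B) (hd : 0 < d) {θ : Fin d → ℝ}
    (hθ : 2 * d * B * ((∑ i, θ i ^ 2) * X) ≤ 1) :
    charFn p θ ≤ Real.exp (-((∑ i, θ i ^ 2) * X / (4 * d))) := by
  have nonneg : 0 ≤ (∑ i, θ i ^ 2) * X := mul_nonneg (sum_sq_nonneg θ) L.variance_pos.le
  have quartic : B * ((∑ i, θ i ^ 2) * X) ^ 2 ≤ (∑ i, θ i ^ 2) * X / (2 * d) := by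
    rw [le_div_iff₀ (by positivity)]
    linarith [mul_le_mul_of_nonneg_left hθ nonneg]
  calc charFn p θ ≤ 1 - (∑ i, θ i ^ 2) * (X / d) * (1 / 2) +
        (∑ i, θ i ^ 2) * X / (2 * d) * (1 / 2) := by linarith [L.charFn_le_one_sub_add θ]
    _ = -((∑ i, θ i ^ 2) * X / (4 * d)) + 1 := by field_simp; ring
    _ ≤ _ := Real.add_one_le_exp _

lemma hasSum_cos_add (L : StepLaw p X B) (θ : Fin d → ℝ) (x : Fin d → ℤ) :
    HasSum (fun y => (p y).toReal * Real.cos (phase θ (x + y)))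
      (charFn p θ * Real.cos (phase θ x)) := by
  have addition (y : Fin d → ℤ) : (p y).toReal * Real.cos (phase θ (x + y)) =
      (p y).toReal * Real.cos (phase θ y) * Real.cos (phase θ x) -
        (p y).toReal * Real.sin (phase θ y) * Real.sin (phase θ x) := by
    rw [map_add, Real.cos_add]
    ring
  simpa only [addition, zero_mul, sub_zero] using
    ((L.hasSum_cos θ).mul_right (Real.cos (phase θ x))).sub
      ((L.hasSum_sin θ).mul_right (Real.sin (phase θ x)))

lemma stepOp_ofReal (L : StepLaw p X B) {u : (Fin d → ℤ) → ℝ} (hu : 0 ≤ u) {x : Fin d → ℤ} {v : ℝ}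
    (hv : HasSum (fun y => (p y).toReal * u (x + y)) v) :
    0 ≤ v ∧ stepOp p (fun y => ENNReal.ofReal (u y)) x = ENNReal.ofReal v := by
  have nonneg (y : Fin d → ℤ) : 0 ≤ (p y).toReal * u (x + y) :=
    mul_nonneg ENNReal.toReal_nonneg (hu _)
  refine ⟨hv.nonneg nonneg, ?_⟩
  rw [← hv.tsum_eq, ENNReal.ofReal_tsum_of_nonneg nonneg hv.summable]
  refine tsum_congr fun y => ?_
  rw [ENNReal.ofReal_mul ENNReal.toReal_nonneg, ENNReal.ofReal_toReal (L.ne_top y)]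

lemma stepOp_iterate_sum_cos (L : StepLaw p X B) {ι : Type*} [Fintype ι] (θ : ι → Fin d → ℝ)
    (hθ : 0 ≤ fun x => ∑ j, Real.cos (phase (θ j) x)) (k : ℕ) :
    (0 ≤ fun x => ∑ j, charFn p (θ j) ^ k * Real.cos (phase (θ j) x)) ∧
    (stepOp p)^[k] (fun x => ENNReal.ofReal (∑ j, Real.cos (phase (θ j) x))) =
      fun x => ENNReal.ofReal (∑ j, charFn p (θ j) ^ k * Real.cos (phase (θ j) x)) := by
  induction k with
  | zero => simpa using hθ
  | succ k ih =>
    have eigen (x : Fin d → ℤ) : HasSum (fun y => (p y).toReal *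
        ∑ j, charFn p (θ j) ^ k * Real.cos (phase (θ j) (x + y)))
        (∑ j, charFn p (θ j) ^ (k + 1) * Real.cos (phase (θ j) x)) := by
      simp only [Finset.mul_sum, pow_succ, mul_assoc, mul_left_comm (p _).toReal]
      exact hasSum_sum fun j _ => (L.hasSum_cos_add (θ j) x).mul_left _
    have step (x : Fin d → ℤ) := L.stepOp_ofReal ih.1 (eigen x)
    refine ⟨fun x => (step x).1, funext fun x => ?_⟩
    rw [Function.iterate_succ_apply', ih.2]
    exact (step x).2

end StepLaw

end CharacteristicFunction

section ConvolutionPower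

/-- The `k`-fold convolution power of `p`, the distribution of the walk after `k` steps. -/
def convPow {V : Type*} [AddCommGroup V] (p : V → ℝ≥0∞) : ℕ → V → ℝ≥0∞
  | 0 => Set.indicator {0} 1
  | k + 1 => conv (convPow p k) p

variable {V : Type*} [AddCommGroup V]

lemma stepOp_iterate (p : V → ℝ≥0∞) (k : ℕ) : (stepOp p)^[k] = stepOp (convPow p k) := by
  induction k with
  | zero =>
    funext u x
    rw [stepOp, tsum_eq_single 0 fun y hy => by simp [convPow, hy]]
    simp [convPow]
  | succ k ih =>
    funext u
    rw [Function.iterate_succ_apply, ih, convPow, stepOp_conv]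

lemma tsum_convPow (p : V → ℝ≥0∞) (k : ℕ) : ∑' x, convPow p k x = (∑' x, p x) ^ k := by
  induction k with
  | zero =>
    rw [tsum_eq_single 0 fun y hy => by simp [convPow, hy]]
    simp [convPow]
  | succ k ih => rw [convPow, tsum_conv, ih, pow_succ]

variable {d : ℕ} {p : (Fin d → ℤ) → ℝ≥0∞} {X B : ℝ}

namespace StepLaw

lemma tsum_convPow_eq_one (L : StepLaw p X B) (k : ℕ) : ∑' x, convPow p k x = 1 := by
  rw [tsum_convPow, L.tsum_eq_one, one_pow]

lemma secondMoment_convPow (L : StepLaw p X B) (k : ℕ) :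
    secondMoment (convPow p k) = ENNReal.ofReal (k * X) := by
  induction k with
  | zero =>
    rw [secondMoment, tsum_eq_single 0 fun y hy => by simp [convPow, hy]]
    simp [sqNormE_zero]
  | succ k ih =>
    have hX := L.variance_pos
    rw [convPow, secondMoment_conv _ L.symm.even, L.tsum_eq_one, L.tsum_convPow_eq_one, ih,
      L.secondMoment_eq, one_mul, one_mul, ← ENNReal.ofReal_add (by positivity) hX.le]
    congr 1
    push_cast
    ring

lemma fourthMoment_convPow_le (L : StepLaw p X B) (k : ℕ) :
    fourthMoment (convPow p k) ≤ ENNReal.ofReal ((k * B + 3 * k ^ 2) * X ^ 2) := by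
  have hX := L.variance_pos
  have hB := L.one_le_kurtosis
  induction k with
  | zero =>
    rw [fourthMoment, tsum_eq_single 0 fun y hy => by simp [convPow, hy]]
    simp [sqNormE_zero]
  | succ k ih =>
    calc fourthMoment (convPow p (k + 1))
        ≤ ENNReal.ofReal ((k * B + 3 * k ^ 2) * X ^ 2) +
            ENNReal.ofReal 6 * ENNReal.ofReal X * ENNReal.ofReal (k * X) +
            ENNReal.ofReal (B * X ^ 2) := by
          refine (fourthMoment_conv_le _ L.symm.even).trans ?_
          rw [L.tsum_eq_one, L.tsum_convPow_eq_one, one_mul, one_mul, L.secondMoment_eq,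
            L.secondMoment_convPow, ENNReal.ofReal_ofNat]
          exact add_le_add (add_le_add_left ih _) L.fourthMoment_le
      _ = ENNReal.ofReal ((k * B + 3 * k ^ 2) * X ^ 2 + 6 * X * (k * X) + B * X ^ 2) := by
          rw [← ENNReal.ofReal_mul (by norm_num), ← ENNReal.ofReal_mul (by positivity),
            ← ENNReal.ofReal_add (by positivity) (by positivity),
            ← ENNReal.ofReal_add (by positivity) (by positivity)]
      _ ≤ _ := by
          refine ENNReal.ofReal_le_ofReal ?_
          push_cast
          nlinarith [sq_nonneg X]

end StepLaw

end ConvolutionPower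

section SmallBall

variable {d N : ℕ} {h : ℝ}

lemma supNorm_le_sqNorm (x : Fin d → ℤ) : supNorm x ≤ sqNorm x := by
  have integral : sqNorm x = ((∑ i, (x i).natAbs ^ 2 : ℕ) : ℝ) := by simp [sqNorm]
  rw [integral, supNorm, Nat.cast_le]
  exact Finset.sup_le fun i _ => (Nat.le_self_pow two_ne_zero _).trans <|
    Finset.single_le_sum (f := fun i => (x i).natAbs ^ 2) (fun _ _ => Nat.zero_le _)
      (Finset.mem_univ i)

/-- The mass of the discrete Gaussian weight that bounds the characteristic function of a
rescaled walk. -/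
def gaussianMass (d : ℕ) : ℝ := ∑' x : Fin d → ℤ, Real.exp (-(sqNorm x / (4 * d)))

lemma summable_gaussian (hd : 0 < d) :
    Summable fun x : Fin d → ℤ => Real.exp (-(sqNorm x / (4 * d))) := by
  have : (0 : ℝ) < d := Nat.cast_pos.2 hd
  have exponential := ENNReal.summable_toReal
    (tsum_exp_neg_mul_supNorm_lt_top (d := d) (c := 1 / (4 * d)) (by positivity)).ne
  refine .of_nonneg_of_le (fun _ => (Real.exp_pos _).le) (fun x => ?_) exponential
  rw [ENNReal.toReal_ofReal (Real.exp_pos _).le, neg_mul, one_div_mul_eq_div]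
  have := supNorm_le_sqNorm x
  gcongr

lemma gaussianMass_nonneg : 0 ≤ gaussianMass d := tsum_nonneg fun _ => (Real.exp_pos _).le

/-- The frequency `h j`, for `j` in the cube `{0, …, N - 1}^d`. -/
def gridFreq (h : ℝ) (j : Fin d → Fin N) : Fin d → ℝ := fun i => h * (j i : ℕ)

/-- The difference of two points of the cube `{0, …, N - 1}^d`, as a lattice vector. -/
def gridDiff (j k : Fin d → Fin N) : Fin d → ℤ := fun i => ((j i : ℕ) : ℤ) - (k i : ℕ)

lemma gridDiff_injective (j : Fin d → Fin N) : Function.Injective (gridDiff j) := fun k l hkl =>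
  funext fun i => Fin.ext (by simpa [gridDiff] using congrFun hkl i)

lemma sum_gridFreq_sq_le (h : ℝ) (j : Fin d → Fin N) :
    ∑ i, gridFreq h j i ^ 2 ≤ d * (h ^ 2 * N ^ 2) := by
  have coordinate (i : Fin d) : gridFreq h j i ^ 2 ≤ h ^ 2 * N ^ 2 := by
    have : ((j i : ℕ) : ℝ) ≤ N := Nat.cast_le.2 (j i).2.le
    rw [gridFreq, mul_pow]
    gcongr
  simpa using Finset.sum_le_card_nsmul Finset.univ _ _ fun i _ => coordinate i

lemma sum_gridFreq_sub_sq (h : ℝ) (j k : Fin d → Fin N) :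
    ∑ i, (gridFreq h j - gridFreq h k) i ^ 2 = h ^ 2 * sqNorm (gridDiff j k) := by
  rw [sqNorm, Finset.mul_sum]
  refine Finset.sum_congr rfl fun i _ => ?_
  simp only [Pi.sub_apply, gridFreq, gridDiff, Int.cast_sub, Int.cast_natCast]
  ring

lemma sqNorm_gridDiff_le (j k : Fin d → Fin N) : sqNorm (gridDiff j k) ≤ d * N ^ 2 := by
  have coordinate (i : Fin d) : (gridDiff j k i : ℝ) ^ 2 ≤ (N : ℝ) ^ 2 := by
    have hj := (j i).2
    have hk := (k i).2
    rw [sq_le_sq]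
    exact_mod_cast (abs_le.2 ⟨by rw [gridDiff]; omega, by rw [gridDiff]; omega⟩ :
      |gridDiff j k i| ≤ (N : ℤ)).trans (le_abs_self _)
  simpa [sqNorm] using Finset.sum_le_card_nsmul Finset.univ _ _ fun i _ => coordinate i

lemma sum_exp_gridDiff_le (hd : 0 < d) (N : ℕ) :
    ∑ jk : (Fin d → Fin N) × (Fin d → Fin N), Real.exp (-(sqNorm (gridDiff jk.1 jk.2) / (4 * d))) ≤
      N ^ d * gaussianMass d := by
  have row (j : Fin d → Fin N) :
      ∑ k, Real.exp (-(sqNorm (gridDiff j k) / (4 * d))) ≤ gaussianMass d := by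
    rw [← tsum_fintype (L := .unconditional _)]
    exact tsum_comp_le_tsum_of_inj (summable_gaussian hd) (fun _ => (Real.exp_pos _).le)
      (gridDiff_injective j)
  rw [Fintype.sum_prod_type]
  simpa using Finset.sum_le_card_nsmul Finset.univ _ _ fun j _ => row j

/-- The unnormalised Fejér kernel with spacing `h`: the squared modulus of the character sum over
the cube `{0, …, N - 1}^d`. -/
def fejer (N : ℕ) (h : ℝ) (x : Fin d → ℤ) : ℝ :=
  ∑ jk : (Fin d → Fin N) × (Fin d → Fin N),
    Real.cos (phase (gridFreq h jk.1 - gridFreq h jk.2) x)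

lemma fejer_eq (N : ℕ) (h : ℝ) (x : Fin d → ℤ) :
    fejer N h x = (∑ j : Fin d → Fin N, Real.cos (phase (gridFreq h j) x)) ^ 2 +
      (∑ j : Fin d → Fin N, Real.sin (phase (gridFreq h j) x)) ^ 2 := by
  simp only [fejer, phase_sub, Real.cos_sub, Finset.sum_add_distrib, sq, Finset.sum_mul_sum,
    Fintype.sum_prod_type]

lemma fejer_nonneg (N : ℕ) (h : ℝ) : 0 ≤ (fejer N h : (Fin d → ℤ) → ℝ) := fun x => by
  rw [fejer_eq]
  exact add_nonneg (sq_nonneg _) (sq_nonneg _)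

lemma pow_div_four_le_fejer {x : Fin d → ℤ} (hx : d * (h ^ 2 * N ^ 2) * sqNorm x ≤ 1) :
    (N : ℝ) ^ (2 * d) / 4 ≤ fejer N h x := by
  have cos_ge (j : Fin d → Fin N) : 1 / 2 ≤ Real.cos (phase (gridFreq h j) x) := by
    have := mul_le_mul_of_nonneg_right (sum_gridFreq_sq_le h j) (sqNorm_nonneg x)
    linarith [phase_sq_le (gridFreq h j) x,
      Real.one_sub_sq_div_two_le_cos (x := phase (gridFreq h j) x)]
  have sum_ge : (N : ℝ) ^ d * (1 / 2) ≤ ∑ j : Fin d → Fin N, Real.cos (phase (gridFreq h j) x) := by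
    simpa using Finset.card_nsmul_le_sum Finset.univ _ _ fun j _ => cos_ge j
  have := pow_le_pow_left₀ (by positivity) sum_ge 2
  rw [fejer_eq]
  calc (N : ℝ) ^ (2 * d) / 4 = ((N : ℝ) ^ d * (1 / 2)) ^ 2 := by ring
    _ ≤ _ := by linarith [sq_nonneg (∑ j : Fin d → Fin N, Real.sin (phase (gridFreq h j) x))]

variable {p : (Fin d → ℤ) → ℝ≥0∞} {X B : ℝ} {k : ℕ}

namespace StepLaw

lemma charFn_gridFreq_pow_le (L : StepLaw p X B) (hd : 0 < d) (hh : k * h ^ 2 * X = 1)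
    (hN : 2 * d ^ 2 * B * N ^ 2 ≤ k) (i j : Fin d → Fin N) :
    0 ≤ charFn p (gridFreq h i - gridFreq h j) ^ k ∧
    charFn p (gridFreq h i - gridFreq h j) ^ k ≤
      Real.exp (-(sqNorm (gridDiff i j) / (4 * d))) := by
  have hX := L.variance_pos
  have hB := L.one_le_kurtosis
  have small : 2 * d * B * ((∑ a, (gridFreq h i - gridFreq h j) a ^ 2) * X) ≤ 1 := by
    rw [sum_gridFreq_sub_sq]
    calc 2 * d * B * (h ^ 2 * sqNorm (gridDiff i j) * X)
        ≤ 2 * d * B * (h ^ 2 * (d * N ^ 2) * X) := by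
          have := sqNorm_gridDiff_le i j
          gcongr
      _ = 2 * d ^ 2 * B * N ^ 2 * (h ^ 2 * X) := by ring
      _ ≤ k * (h ^ 2 * X) := by gcongr
      _ = 1 := by rw [← mul_assoc, hh]
  have nonneg := L.charFn_nonneg hd small
  refine ⟨pow_nonneg nonneg k, (pow_le_pow_left₀ nonneg (L.charFn_le_exp hd small) k).trans_eq ?_⟩
  rw [← Real.exp_nat_mul, sum_gridFreq_sub_sq]
  congr 1
  calc (k : ℝ) * -(h ^ 2 * sqNorm (gridDiff i j) * X / (4 * d))
      = -(k * h ^ 2 * X * sqNorm (gridDiff i j) / (4 * d)) := by ring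
    _ = _ := by rw [hh, one_mul]

lemma stepOp_iterate_fejer_le (L : StepLaw p X B) (hd : 0 < d) (hh : k * h ^ 2 * X = 1)
    (hN : 2 * d ^ 2 * B * N ^ 2 ≤ k) (x : Fin d → ℤ) :
    (stepOp p)^[k] (fun y => ENNReal.ofReal (fejer N h y)) x ≤
      ENNReal.ofReal (N ^ d * gaussianMass d) := by
  refine (congrFun (L.stepOp_iterate_sum_cos _ (fejer_nonneg N h) k).2 x).trans_le ?_
  refine ENNReal.ofReal_le_ofReal
    ((Finset.sum_le_sum fun jk _ => ?_).trans (sum_exp_gridDiff_le hd N))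
  obtain ⟨nonneg, le_exp⟩ := L.charFn_gridFreq_pow_le hd hh hN jk.1 jk.2
  exact (mul_le_of_le_one_right nonneg (Real.cos_le_one _)).trans le_exp

lemma stepOp_convPow_ball_le (L : StepLaw p X B) (hd : 0 < d) (hk₀ : 0 < k) (hN₀ : 0 < N)
    (hN : 2 * d ^ 2 * B * N ^ 2 ≤ k) (x : Fin d → ℤ) :
    stepOp (convPow p k) ({y | d * N ^ 2 * sqNorm y ≤ k * X}.indicator 1) x ≤
      ENNReal.ofReal (4 * gaussianMass d / N ^ d) := by
  have hX := L.variance_pos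
  set h : ℝ := √(1 / (k * X))
  have hh : h ^ 2 = 1 / (k * X) := Real.sq_sqrt (by positivity)
  have indicator_le : {y : Fin d → ℤ | d * N ^ 2 * sqNorm y ≤ k * X}.indicator 1 ≤
      fun y => ENNReal.ofReal (4 / N ^ (2 * d)) * ENNReal.ofReal (fejer N h y) := by
    refine fun y => Set.indicator_apply_le' (fun hy => ?_) fun _ => zero_le
    have lower := pow_div_four_le_fejer (N := N) (h := h) (x := y) (by
      rw [hh, show (d * (1 / (k * X) * N ^ 2) * sqNorm y : ℝ) = d * N ^ 2 * sqNorm y / (k * X) by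
        ring]
      exact div_le_one_of_le₀ hy (by positivity))
    beta_reduce
    rw [Pi.one_apply, ← ENNReal.ofReal_mul (by positivity), ENNReal.one_le_ofReal]
    calc (1 : ℝ) = 4 / N ^ (2 * d) * (N ^ (2 * d) / 4) := by field_simp
      _ ≤ _ := by gcongr
  have upper := L.stepOp_iterate_fejer_le hd (h := h) (by rw [hh]; field_simp) hN x
  rw [stepOp_iterate] at upper
  calc stepOp (convPow p k) ({y | d * N ^ 2 * sqNorm y ≤ k * X}.indicator 1) x
      ≤ ENNReal.ofReal (4 / N ^ (2 * d)) * ENNReal.ofReal (N ^ d * gaussianMass d) := by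
        refine (stepOp_mono le_rfl indicator_le x).trans ?_
        rw [stepOp_const_mul]
        exact mul_le_mul_right upper _
    _ = ENNReal.ofReal (4 * gaussianMass d / N ^ d) := by
        rw [← ENNReal.ofReal_mul (by positivity)]
        congr 1
        field_simp
        ring

end StepLaw

end SmallBall

section Weight

variable {d : ℕ} {X Y c : ℝ} {x : Fin d → ℤ}

/-- A smoothed indicator of the ball `|x|² ≤ X`, with the quartic tail that the fourth moment of a
walk can control. -/
def weight (X : ℝ) (x : Fin d → ℤ) : ℝ := X ^ 2 / (X ^ 2 + sqNorm x ^ 2)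

/-- The function `weight X` with values in `ℝ≥0∞`. -/
def weightE (X : ℝ) (x : Fin d → ℤ) : ℝ≥0∞ := ENNReal.ofReal (weight X x)

lemma weight_nonneg (X : ℝ) (x : Fin d → ℤ) : 0 ≤ weight X x := by
  rw [weight]
  positivity

lemma weight_le_one (X : ℝ) (x : Fin d → ℤ) : weight X x ≤ 1 :=
  div_le_one_of_le₀ (le_add_of_nonneg_right (sq_nonneg _)) (by positivity)

lemma weightE_le_one (X : ℝ) : (weightE X : (Fin d → ℤ) → ℝ≥0∞) ≤ 1 := fun x =>
  ENNReal.ofReal_le_one.2 (weight_le_one X x)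

lemma weight_mono (hX : 0 < X) (h : X ≤ Y) (x : Fin d → ℤ) : weight X x ≤ weight Y x := by
  have hY : 0 < Y := hX.trans_le h
  rw [weight, weight, div_le_div_iff₀ (by positivity) (by positivity), mul_add, mul_add,
    mul_comm (X ^ 2) (Y ^ 2)]
  gcongr

lemma weight_le_of_le_sqNorm (hX : 0 < X) (hc : 0 < c) (h : X ≤ c * sqNorm x) :
    weight X x ≤ c ^ 2 := by
  rw [weight, div_le_iff₀ (by positivity)]
  calc X ^ 2 ≤ (c * sqNorm x) ^ 2 := by gcongr
    _ ≤ c ^ 2 * (X ^ 2 + sqNorm x ^ 2) := by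
      rw [mul_pow]
      gcongr
      exact le_add_of_nonneg_left (sq_nonneg _)

lemma sqNorm_sq_mul_weight_le (X : ℝ) (x : Fin d → ℤ) : sqNorm x ^ 2 * weight X x ≤ X ^ 2 := by
  rw [weight, mul_div_left_comm]
  exact mul_le_of_le_one_right (sq_nonneg _) <|
    div_le_one_of_le₀ (le_add_of_nonneg_left (sq_nonneg _)) (by positivity)

lemma one_le_mul_weight (hX : 0 < X) (h : sqNorm x ≤ d * X) :
    1 ≤ (1 + (d : ℝ) ^ 2) * weight X x := by
  have := pow_le_pow_left₀ (sqNorm_nonneg x) h 2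
  rw [weight, ← mul_div_assoc, one_le_div (by positivity)]
  linarith

lemma le_ofReal_add_mul_weightE {R : ℝ≥0∞} {a b : ℝ} (hY : 0 < Y) (ha : 0 ≤ a) (hb : 0 ≤ b)
    (hR : R ≤ ENNReal.ofReal a) (h : sqNormE x ^ 2 * R ≤ ENNReal.ofReal (b * Y ^ 2)) :
    R ≤ ENNReal.ofReal (a + b) * weightE Y x := by
  have finite : R ≠ ∞ := (hR.trans_lt ENNReal.ofReal_lt_top).ne
  have hR' : R.toReal ≤ a := ENNReal.toReal_le_of_le_ofReal ha hR
  have h' : sqNorm x ^ 2 * R.toReal ≤ b * Y ^ 2 := by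
    simpa [sqNormE, sqNorm_nonneg] using ENNReal.toReal_le_of_le_ofReal (by positivity) h
  rw [weightE, ← ENNReal.ofReal_mul (by positivity), ← ENNReal.ofReal_toReal finite]
  refine ENNReal.ofReal_le_ofReal ?_
  rw [weight, ← mul_div_assoc, le_div_iff₀ (by positivity)]
  have := mul_le_mul_of_nonneg_right hR' (sq_nonneg Y)
  linarith

end Weight

section WeightSmallBall

variable {d : ℕ} {p : (Fin d → ℤ) → ℝ≥0∞} {X B : ℝ} {k n : ℕ} {N N' : ℕ}

lemma weight_le_of_lt_sqNorm {y : Fin d → ℤ} (hX : 0 < X) (hd : 0 < d) (hk : 0 < k) (hN : 0 < N)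
    (h : k * X < d * N ^ 2 * sqNorm y) : weight X y ≤ (d * N ^ 2 / k) ^ 2 := by
  refine weight_le_of_le_sqNorm hX (by positivity) ?_
  rw [div_mul_eq_mul_div, le_div_iff₀ (by positivity), mul_comm]
  exact h.le

lemma weightE_le_indicator_add (hX : 0 < X) (hd : 0 < d) (hk : 0 < k) (hN : 0 < N) (hN' : 0 < N')
    (y : Fin d → ℤ) :
    weightE X y ≤ {y | d * N ^ 2 * sqNorm y ≤ k * X}.indicator 1 y +
      (ENNReal.ofReal ((d * N ^ 2 / k) ^ 2) *
        {y | d * N' ^ 2 * sqNorm y ≤ k * X}.indicator 1 y +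
      ENNReal.ofReal ((d * N' ^ 2 / k) ^ 2)) := by
  by_cases inner : y ∈ {y | d * N ^ 2 * sqNorm y ≤ k * X}
  · rw [Set.indicator_of_mem inner]
    exact (weightE_le_one X y).trans le_self_add
  refine le_add_left ?_
  by_cases outer : y ∈ {y | d * N' ^ 2 * sqNorm y ≤ k * X}
  · rw [Set.indicator_of_mem outer, Pi.one_apply, mul_one]
    exact le_add_right <| ENNReal.ofReal_le_ofReal <|
      weight_le_of_lt_sqNorm hX hd hk hN (not_le.1 inner)
  · exact le_add_left <| ENNReal.ofReal_le_ofReal <|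
      weight_le_of_lt_sqNorm hX hd hk hN' (not_le.1 outer)

/-- The constant in the bound `weightConst d / n²¹` for the mean weight after `n²⁰` steps. -/
def weightConst (d : ℕ) : ℝ := 4 * (1 + d ^ 2) * gaussianMass d + d ^ 2

lemma weightConst_nonneg (d : ℕ) : 0 ≤ weightConst d := by
  have := gaussianMass_nonneg (d := d)
  rw [weightConst]
  positivity

lemma two_scale_bound_le_weightConst_div (hd : 3 ≤ d) (hn : 1 ≤ n) :
    4 * gaussianMass d / ((n : ℝ) ^ 7) ^ d +
      ((d * ((n : ℝ) ^ 7) ^ 2 / n ^ 20) ^ 2 * (4 * gaussianMass d / (n ^ 4) ^ d) +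
        (d * ((n : ℝ) ^ 4) ^ 2 / n ^ 20) ^ 2) ≤ weightConst d / n ^ 21 := by
  have hn' : (1 : ℝ) ≤ n := Nat.one_le_cast.2 hn
  have hg := gaussianMass_nonneg (d := d)
  have inner : 4 * gaussianMass d / ((n : ℝ) ^ 7) ^ d ≤ 4 * gaussianMass d / n ^ 21 := by
    rw [← pow_mul]
    gcongr 4 * gaussianMass d / ?_
    exact pow_le_pow_right₀ hn' (by omega)
  have outer : (d * ((n : ℝ) ^ 7) ^ 2 / n ^ 20) ^ 2 * (4 * gaussianMass d / (n ^ 4) ^ d) ≤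
      d ^ 2 * (4 * gaussianMass d) / n ^ 21 := by
    calc (d * ((n : ℝ) ^ 7) ^ 2 / n ^ 20) ^ 2 * (4 * gaussianMass d / (n ^ 4) ^ d)
        = d ^ 2 * (4 * gaussianMass d) / n ^ (12 + 4 * d) := by
          rw [pow_add, pow_mul]
          field_simp
      _ ≤ _ := by
          gcongr d ^ 2 * (4 * gaussianMass d) / ?_
          exact pow_le_pow_right₀ hn' (by omega)
  have tail : (d * ((n : ℝ) ^ 4) ^ 2 / n ^ 20) ^ 2 ≤ d ^ 2 / n ^ 21 := by
    calc (d * ((n : ℝ) ^ 4) ^ 2 / n ^ 20) ^ 2 = d ^ 2 / n ^ 24 := by field_simp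
      _ ≤ _ := by
          gcongr
          norm_num
  calc _ ≤ 4 * gaussianMass d / (n : ℝ) ^ 21 +
        (d ^ 2 * (4 * gaussianMass d) / n ^ 21 + d ^ 2 / n ^ 21) :=
        add_le_add inner (add_le_add outer tail)
    _ = weightConst d / n ^ 21 := by
        rw [weightConst]
        ring

namespace StepLaw

lemma stepOp_convPow_weightE_le (L : StepLaw p X B) (hd : 0 < d) (hk : 0 < k) (hN' : 0 < N')
    (hNN' : N' ≤ N) (hN : 2 * d ^ 2 * B * N ^ 2 ≤ k) (x : Fin d → ℤ) :
    stepOp (convPow p k) (weightE X) x ≤ ENNReal.ofReal (4 * gaussianMass d / N ^ d +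
      ((d * N ^ 2 / k) ^ 2 * (4 * gaussianMass d / N' ^ d) + (d * N' ^ 2 / k) ^ 2)) := by
  have hB := L.one_le_kurtosis
  have hg := gaussianMass_nonneg (d := d)
  have hN₀ := hN'.trans_le hNN'
  have condition' : 2 * d ^ 2 * B * N' ^ 2 ≤ k := hN.trans' (by gcongr)
  have inner := L.stepOp_convPow_ball_le hd hk hN₀ hN x
  have outer := L.stepOp_convPow_ball_le hd hk hN' condition' x
  refine (stepOp_mono le_rfl
    (weightE_le_indicator_add L.variance_pos hd hk hN₀ hN') x).trans ?_
  simp only [stepOp_add, stepOp_const_mul, stepOp_const, L.tsum_convPow_eq_one, one_mul]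
  rw [ENNReal.ofReal_add (by positivity) (by positivity),
    ENNReal.ofReal_add (by positivity) (by positivity), ENNReal.ofReal_mul (by positivity)]
  gcongr

lemma stepOp_convPow_pow_weightE_le (L : StepLaw p X B) (hd : 3 ≤ d) (hn : 1 ≤ n)
    (hB : 2 * d ^ 2 * B ≤ n) (x : Fin d → ℤ) :
    stepOp (convPow p (n ^ 20)) (weightE X) x ≤ ENNReal.ofReal (weightConst d / n ^ 21) := by
  have hn' : (1 : ℝ) ≤ n := Nat.one_le_cast.2 hn
  have condition : 2 * d ^ 2 * B * ((n ^ 7 : ℕ) : ℝ) ^ 2 ≤ ((n ^ 20 : ℕ) : ℝ) := by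
    push_cast
    calc 2 * d ^ 2 * B * ((n : ℝ) ^ 7) ^ 2 ≤ (n : ℝ) ^ 6 * (n ^ 7) ^ 2 := by
          gcongr
          exact hB.trans (le_self_pow₀ hn' (by norm_num))
      _ = (n : ℝ) ^ 20 := by ring
  refine (L.stepOp_convPow_weightE_le (by omega) (by positivity) (by positivity)
    (Nat.pow_le_pow_right hn (by norm_num : 4 ≤ 7)) condition x).trans ?_
  push_cast
  exact ENNReal.ofReal_le_ofReal (two_scale_bound_le_weightConst_div hd hn)

end StepLaw

end WeightSmallBall

section Contraction

variable {d : ℕ} {q p : (Fin d → ℤ) → ℝ≥0∞} {X B S : ℝ} {K : ℕ}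

lemma sqNorm_sq_le_add_add (x a b : Fin d → ℤ) :
    sqNorm x ^ 2 ≤ 27 * (sqNorm (x + a + b) ^ 2 + sqNorm a ^ 2 + sqNorm b ^ 2) := by
  have sq_add_le (u v w : ℝ) : (u + v + w) ^ 2 ≤ 3 * (u ^ 2 + v ^ 2 + w ^ 2) := by
    nlinarith [sq_nonneg (u - v), sq_nonneg (u - w), sq_nonneg (v - w)]
  have sqNorm_le : sqNorm x ≤ 3 * (sqNorm (x + a + b) + sqNorm a + sqNorm b) := by
    simp only [sqNorm, ← Finset.sum_add_distrib, Finset.mul_sum]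
    refine Finset.sum_le_sum fun i _ => ?_
    have := sq_add_le (x i + a i + b i) (-a i) (-b i)
    simp only [Pi.add_apply, Int.cast_add]
    ring_nf at this ⊢
    exact this
  calc sqNorm x ^ 2 ≤ (3 * (sqNorm (x + a + b) + sqNorm a + sqNorm b)) ^ 2 :=
        pow_le_pow_left₀ (sqNorm_nonneg x) sqNorm_le 2
    _ ≤ _ := by linarith [sq_add_le (sqNorm (x + a + b)) (sqNorm a) (sqNorm b)]

lemma sqNormE_sq_mul_weightE_le (X : ℝ) (x a b : Fin d → ℤ) :
    sqNormE x ^ 2 * weightE X (x + a + b) ≤ 27 * (ENNReal.ofReal (X ^ 2) +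
      sqNormE a ^ 2 * weightE X (x + a + b) + sqNormE b ^ 2 * weightE X (x + a + b)) := by
  have hw := weight_nonneg X (x + a + b)
  simp only [sqNormE, weightE, ← ENNReal.ofReal_pow (sqNorm_nonneg _)]
  rw [← ENNReal.ofReal_mul (by positivity), ← ENNReal.ofReal_mul (by positivity),
    ← ENNReal.ofReal_mul (by positivity), ← ENNReal.ofReal_add (by positivity) (by positivity),
    ← ENNReal.ofReal_add (by positivity) (by positivity), ← ENNReal.ofReal_ofNat 27,
    ← ENNReal.ofReal_mul (by norm_num)]
  refine ENNReal.ofReal_le_ofReal ?_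
  have := mul_le_mul_of_nonneg_right (sqNorm_sq_le_add_add x a b) hw
  linarith [sqNorm_sq_mul_weight_le X (x + a + b)]

lemma sqNormE_sq_mul_stepOp_stepOp_weightE_le (hq : ∑' y, q y = 1) {S : ℝ≥0∞}
    (hS : ∀ x, stepOp q (weightE X) x ≤ S) (x : Fin d → ℤ) :
    sqNormE x ^ 2 * stepOp q (stepOp q (weightE X)) x ≤
      27 * (ENNReal.ofReal (X ^ 2) + fourthMoment q * S + fourthMoment q * S) := by
  have constant : ∑' a, ∑' b, q a * q b * ENNReal.ofReal (X ^ 2) = ENNReal.ofReal (X ^ 2) := by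
    simp only [ENNReal.tsum_mul_right, ENNReal.tsum_mul_left, hq, mul_one, one_mul]
  have first : ∑' a, ∑' b, q a * q b * (sqNormE a ^ 2 * weightE X (x + a + b)) ≤
      fourthMoment q * S := by
    rw [fourthMoment, ← ENNReal.tsum_mul_right]
    refine ENNReal.tsum_le_tsum fun a => (mul_le_mul_right (hS (x + a)) _).trans_eq' ?_
    simp only [stepOp, ← ENNReal.tsum_mul_left]
    exact tsum_congr fun b => by ring
  have second : ∑' a, ∑' b, q a * q b * (sqNormE b ^ 2 * weightE X (x + a + b)) ≤
      fourthMoment q * S := by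
    rw [ENNReal.tsum_comm]
    refine first.trans_eq' (tsum_congr fun b => tsum_congr fun a => ?_)
    rw [add_right_comm, mul_comm (q a)]
  calc sqNormE x ^ 2 * stepOp q (stepOp q (weightE X)) x
      = ∑' a, ∑' b, q a * q b * (sqNormE x ^ 2 * weightE X (x + a + b)) := by
        simp only [stepOp, ← ENNReal.tsum_mul_left]
        exact tsum_congr fun a => tsum_congr fun b => by ring
    _ ≤ 27 * (∑' a, ∑' b, q a * q b * ENNReal.ofReal (X ^ 2) +
          ∑' a, ∑' b, q a * q b * (sqNormE a ^ 2 * weightE X (x + a + b)) +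
          ∑' a, ∑' b, q a * q b * (sqNormE b ^ 2 * weightE X (x + a + b))) := by
        simp only [← ENNReal.tsum_add, ← ENNReal.tsum_mul_left]
        refine ENNReal.tsum_le_tsum fun a => ENNReal.tsum_le_tsum fun b => ?_
        exact (mul_le_mul_right (sqNormE_sq_mul_weightE_le X x a b) _).trans_eq (by ring)
    _ ≤ _ := by
        rw [constant]
        gcongr

namespace StepLaw

lemma stepOp_iterate_two_mul_weightE_le (L : StepLaw p X B) (hK : 1 ≤ K) (hS₀ : 0 ≤ S)
    (hS : ∀ x, stepOp (convPow p K) (weightE X) x ≤ ENNReal.ofReal S) (x : Fin d → ℤ) :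
    (stepOp p)^[2 * K] (weightE X) x ≤
      ENNReal.ofReal (S + (27 / 2 * (B + 3) * S + 27 / (2 * K) ^ 2)) *
        weightE (2 * K * X) x := by
  have hX := L.variance_pos
  have hB := L.one_le_kurtosis
  have hK' : (1 : ℝ) ≤ K := Nat.one_le_cast.2 hK
  have fourth : fourthMoment (convPow p K) ≤ ENNReal.ofReal ((B + 3) * K ^ 2 * X ^ 2) := by
    refine (L.fourthMoment_convPow_le K).trans (ENNReal.ofReal_le_ofReal ?_)
    gcongr
    nlinarith [mul_le_mul_of_nonneg_left hK' (by positivity : 0 ≤ B * K)]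
  rw [two_mul K, Function.iterate_add_apply, stepOp_iterate]
  refine le_ofReal_add_mul_weightE (by positivity) hS₀ (by positivity) ?_ ?_
  · refine (stepOp_mono le_rfl hS x).trans_eq ?_
    rw [stepOp_const, L.tsum_convPow_eq_one, one_mul]
  · refine (sqNormE_sq_mul_stepOp_stepOp_weightE_le (L.tsum_convPow_eq_one K) hS x).trans ?_
    calc 27 * (ENNReal.ofReal (X ^ 2) + fourthMoment (convPow p K) * ENNReal.ofReal S +
          fourthMoment (convPow p K) * ENNReal.ofReal S)
        ≤ 27 * (ENNReal.ofReal (X ^ 2) +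
            ENNReal.ofReal ((B + 3) * K ^ 2 * X ^ 2) * ENNReal.ofReal S +
            ENNReal.ofReal ((B + 3) * K ^ 2 * X ^ 2) * ENNReal.ofReal S) := by gcongr
      _ = ENNReal.ofReal (27 * (X ^ 2 + (B + 3) * K ^ 2 * X ^ 2 * S +
            (B + 3) * K ^ 2 * X ^ 2 * S)) := by
          rw [← ENNReal.ofReal_mul (q := S) (by positivity),
            ← ENNReal.ofReal_add (by positivity) (by positivity),
            ← ENNReal.ofReal_add (by positivity) (by positivity), ← ENNReal.ofReal_ofNat 27,
            ← ENNReal.ofReal_mul (by norm_num)]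
      _ = _ := by
          congr 1
          field_simp
          ring

end StepLaw

/-- `T` steps of every walk of kurtosis at most `B` contract the weight by the factor `η`, up to
the diffusive rescaling from `X` to `T X`. -/
structure Contracts (d : ℕ) (B : ℝ) (T : ℕ) (η : ℝ) : Prop where
  one_le : 1 ≤ T
  nonneg : 0 ≤ η
  iterate_le : ∀ (p : (Fin d → ℤ) → ℝ≥0∞) (X : ℝ), StepLaw p X B → ∀ x,
    (stepOp p)^[T] (weightE X) x ≤ ENNReal.ofReal η * weightE (T * X) x

theorem exists_contracts (hd : 3 ≤ d) (hB : 1 ≤ B) :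
    ∃ (T : ℕ) (η : ℝ), Contracts d B T η ∧ η * T ≤ 1 / 8 := by
  have hC := weightConst_nonneg d
  set a : ℝ := 2 * (1 + 27 / 2 * (B + 3)) * weightConst d
  obtain ⟨n, hn⟩ := exists_nat_ge (1 + 2 * d ^ 2 * B + 8 * (a + 14))
  have ha : 0 ≤ a := by positivity
  have hBd : 0 ≤ 2 * d ^ 2 * B := by positivity
  have hn₁ : (1 : ℝ) ≤ n := by linarith
  have hn₁' : 1 ≤ n := Nat.one_le_cast.1 hn₁
  set S : ℝ := weightConst d / n ^ 21 with hS
  have hS₀ : 0 ≤ S := by positivity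
  refine ⟨2 * n ^ 20, S + (27 / 2 * (B + 3) * S + 27 / (2 * (n ^ 20 : ℕ)) ^ 2),
    ⟨by have := Nat.one_le_pow 20 n hn₁'; omega, by positivity, fun p X L x => ?_⟩, ?_⟩
  · have := L.stepOp_iterate_two_mul_weightE_le (Nat.one_le_pow 20 n hn₁') hS₀
      (L.stepOp_convPow_pow_weightE_le hd hn₁' (by linarith)) x
    rwa [Nat.cast_mul, Nat.cast_ofNat]
  · push_cast
    calc (S + (27 / 2 * (B + 3) * S + 27 / (2 * (n : ℝ) ^ 20) ^ 2)) * (2 * n ^ 20)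
        = a / n + 27 / 2 / n ^ 20 := by
          simp only [hS, a]
          field_simp
          ring
      _ ≤ a / n + 14 / n := by
          gcongr
          · norm_num
          · exact le_self_pow₀ hn₁ (by norm_num)
      _ = (a + 14) / n := by ring
      _ ≤ 1 / 8 := by
          rw [div_le_div_iff₀ (by linarith) (by norm_num)]
          linarith

end Contraction

section Renewal

variable {V : Type*} [AddCommGroup V] {p g u : V → ℝ≥0∞} {c Y : ℝ≥0∞}

lemma stepOp_iterate_le_one (hp : ∑' y, p y = 1) (hu : u ≤ 1) (m : ℕ) :
    (stepOp p)^[m] u ≤ 1 := by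
  induction m with
  | zero => exact hu
  | succ m ih =>
    rw [Function.iterate_succ_apply']
    refine (stepOp_mono le_rfl ih).trans (le_of_eq ?_)
    simpa only [hp, mul_one] using! stepOp_const p 1

lemma stepOp_le_add_mul_stepOp_stepOp (hg : ∀ x, g x ≤ c * p x + Y * conv p g x) (z : V) :
    stepOp g u z ≤ c * stepOp p u z + Y * stepOp g (stepOp p u) z := by
  rw [← stepOp_comm p g, ← stepOp_conv]
  simpa only [mul_assoc, ENNReal.tsum_mul_left] using!
    tsum_mul_le_of_le_add_mul hg fun y => u (z + y)

lemma stepOp_le_add_mul_iterate (hp : ∑' y, p y = 1) (hY : 1 ≤ Y)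
    (hg : ∀ x, g x ≤ c * p x + Y * conv p g x) (hu : u ≤ 1) (m : ℕ) (z : V) :
    stepOp g u z ≤ m * Y ^ m * c + Y ^ m * stepOp g ((stepOp p)^[m] u) z := by
  induction m with
  | zero => simp
  | succ m ih =>
    set v := (stepOp p)^[m] u
    have step : stepOp g v z ≤ c + Y * stepOp g (stepOp p v) z := by
      refine (stepOp_le_add_mul_stepOp_stepOp hg z).trans (add_le_add_left ?_ _)
      have := stepOp_iterate_le_one hp hu (m + 1) z
      rw [Function.iterate_succ_apply'] at this
      exact mul_le_of_le_one_right' this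
    rw [Function.iterate_succ_apply']
    calc stepOp g u z ≤ m * Y ^ m * c + Y ^ m * (c + Y * stepOp g (stepOp p v) z) :=
          ih.trans (by gcongr)
      _ = (m + 1) * Y ^ m * c + Y ^ (m + 1) * stepOp g (stepOp p v) z := by ring
      _ ≤ (m + 1 : ℕ) * Y ^ (m + 1) * c + Y ^ (m + 1) * stepOp g (stepOp p v) z := by
          push_cast
          gcongr
          exact m.le_succ

end Renewal

namespace Model

open Set

section EffectiveWalk

variable {d : ℕ} {c₀ : ℝ} {M : Model d c₀} {s t b δ : ℝ}

lemma chi_eq_ofReal (ht : t ∈ M.subcritical) : M.chi t = ENNReal.ofReal (M.chiReal t) :=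
  (ENNReal.ofReal_toReal (chi_lt_top ht).ne).symm

lemma chi_ne_zero (ht : t ∈ M.subcritical) : M.chi t ≠ 0 := by
  rw [chi_eq_ofReal ht]
  exact (ENNReal.ofReal_pos.2 (zero_lt_one.trans_le (one_le_chiReal ht))).ne'

lemma tsum_effStep_mul (M : Model d c₀) (s : ℝ) (u : (Fin d → ℤ) → ℝ≥0∞) :
    ∑' x, M.effStep s x * u x = (∑' x, M.F s x * u x) / M.chi s := by
  simp only [effStep, div_eq_mul_inv, mul_right_comm _ (M.chi s)⁻¹, ENNReal.tsum_mul_right]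

lemma F_eq_chi_mul_effStep (hs : s ∈ M.subcritical) (x : Fin d → ℤ) :
    M.F s x = M.chi s * M.effStep s x :=
  (ENNReal.mul_div_cancel (chi_ne_zero hs) (chi_lt_top hs).ne).symm

lemma F_le_renewal (ht : t ∈ M.subcritical) (hs : 0 ≤ s) (hst : s ≤ t) (x : Fin d → ℤ) :
    M.F t x ≤ M.chi s * M.effStep s x +
      ENNReal.ofReal ((t - s) * M.chiReal s) * conv (M.effStep s) (M.F t) x := by
  have hs' := mem_subcritical_of_le ht hs hst
  refine (F_le_add_conv ht hs hst x).trans_eq ?_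
  simp only [F_eq_chi_mul_effStep hs', conv, mul_assoc, ENNReal.tsum_mul_left]
  rw [chi_eq_ofReal hs', ENNReal.ofReal_mul (sub_nonneg.2 hst), mul_assoc]

lemma toReal_xiSq_pos (hc₀ : 0 < c₀) (hs : s ∈ M.subcritical) : 0 < (M.xiSq s).toReal := by
  rw [toReal_xiSq]
  exact div_pos (secondMomentReal_pos hc₀ hs) (zero_lt_one.trans_le (one_le_chiReal hs))

lemma stepLaw_effStep (hc₀ : 0 < c₀) (hb : b ∈ M.subcritical)
    (S : MomentSystem M.chiReal M.secondMomentReal M.fourthMomentReal b δ) (hs : s ∈ Icc 0 b) :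
    StepLaw (M.effStep s) (M.xiSq s).toReal (kurtosisBound d c₀) := by
  have hs' := mem_subcritical_of_le hb hs.1 hs.2
  have hχ := zero_lt_one.trans_le (one_le_chiReal hs')
  have div_chi {A : ℝ≥0∞} (hA : A < ∞) : A / M.chi s = ENNReal.ofReal (A.toReal / M.chiReal s) := by
    rw [ENNReal.ofReal_div_of_pos hχ, ENNReal.ofReal_toReal hA.ne, chi_eq_ofReal hs']
  refine ⟨fun π e x => ?_, ?_, toReal_xiSq_pos hc₀ hs', by linarith [ten_lt_kurtosisBound d c₀],
    ?_, ?_⟩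
  · rw [effStep, F_isSymmFun M s π e x, effStep]
  · simpa only [mul_one, tsum_F, ENNReal.div_self (chi_ne_zero hs') (chi_lt_top hs').ne] using
      tsum_effStep_mul M s fun _ => 1
  · rw [secondMoment, tsum_effStep_mul, toReal_xiSq]
    exact div_chi (secondMoment_F_lt_top hs')
  · rw [fourthMoment, tsum_effStep_mul, toReal_xiSq]
    refine (div_chi (fourthMoment_F_lt_top hs')).trans_le (ENNReal.ofReal_le_ofReal ?_)
    have kurtosis := S.U_mul_chi_le (ten_lt_kurtosisBound d c₀) (M.fourthMomentReal_zero_le hc₀) hs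
    change M.fourthMomentReal s / M.chiReal s ≤ _
    rw [div_pow, mul_div_assoc', div_le_div_iff₀ hχ (by positivity), sq (M.chiReal s), ← mul_assoc]
    exact mul_le_mul_of_nonneg_right kurtosis hχ.le

end EffectiveWalk

section Stability

variable {d : ℕ} {c₀ : ℝ} {M : Model d c₀} {r s t b η : ℝ} {T : ℕ}

lemma mul_xiSq_le_xiSq (hT : 1 ≤ T)
    (S : MomentSystem M.chiReal M.secondMomentReal M.fourthMomentReal b (1 / (10 * T)))
    (hs : 0 ≤ s) (hsr : s ≤ r) (hr : r ≤ b) (hχ : M.chiReal r = 2 * T * M.chiReal s) :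
    T * (M.xiSq s).toReal ≤ (M.xiSq r).toReal := by
  have hT' : (1 : ℝ) ≤ T := by exact_mod_cast hT
  have χs := S.chi_pos s ⟨hs, hsr.trans hr⟩
  have Vs := S.V_pos s ⟨hs, hsr.trans hr⟩
  have Vr := S.V_pos r ⟨hs.trans hsr, hr⟩
  have growth := S.mul_log_chi_sub_le hs hsr hr
  have log_chi : Real.log (M.chiReal r) = Real.log 2 + Real.log T + Real.log (M.chiReal s) := by
    rw [hχ, Real.log_mul (by positivity) χs.ne', Real.log_mul two_ne_zero (by positivity)]
  have loss : 2 * (1 / (10 * (T : ℝ))) * (Real.log 2 + Real.log T) ≤ 1 / 5 := by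
    have : Real.log 2 + Real.log T ≤ T := by
      linarith [Real.log_le_sub_one_of_pos (zero_lt_one.trans_le hT'), Real.log_two_lt_d9]
    calc 2 * (1 / (10 * (T : ℝ))) * (Real.log 2 + Real.log T) ≤ 2 * (1 / (10 * (T : ℝ))) * T := by
          gcongr
      _ = 1 / 5 := by field_simp; norm_num
  have log_V : Real.log 2 + 2 * Real.log T + Real.log (M.secondMomentReal s) ≤
      Real.log (M.secondMomentReal r) := by
    rw [log_chi] at growth
    linarith [Real.log_two_gt_d9]
  have V_le : 2 * T ^ 2 * M.secondMomentReal s ≤ M.secondMomentReal r := by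
    rw [← Real.log_le_log_iff (by positivity) Vr, Real.log_mul (by positivity) Vs.ne',
      Real.log_mul two_ne_zero (by positivity), Real.log_pow]
    exact_mod_cast log_V
  rw [toReal_xiSq, toReal_xiSq, hχ, mul_div_assoc', div_le_div_iff₀ χs (by positivity)]
  nlinarith

lemma inv_one_sub_pow_le_two (hT : 1 ≤ T) : (1 - 1 / (10 * (T : ℝ)))⁻¹ ^ T ≤ 2 := by
  have hT' : (1 : ℝ) ≤ T := by exact_mod_cast hT
  have le_tenth : 1 / (10 * (T : ℝ)) ≤ 1 / 10 :=
    one_div_le_one_div_of_le (by norm_num) (by linarith)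
  have bernoulli := one_add_mul_le_pow (a := -(1 / (10 * (T : ℝ)))) (by linarith) T
  have : (T : ℝ) * -(1 / (10 * (T : ℝ))) = -(1 / 10) := by field_simp
  rw [this, ← sub_eq_add_neg 1 (1 / (10 * (T : ℝ)))] at bernoulli
  rw [inv_pow]
  exact inv_le_of_inv_le₀ two_pos (by linarith)

/-- Iterating the renewal inequality `T` times between `s` and the scale `r` at which `χ` has grown
by the factor `2T`. -/
lemma stepOp_weightE_le_renormalised (hc₀ : 0 < c₀) (C : Contracts d (kurtosisBound d c₀) T η)
    (hb : b ∈ M.subcritical)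
    (S : MomentSystem M.chiReal M.secondMomentReal M.fourthMomentReal b (1 / (10 * T)))
    (hs : 0 ≤ s) (hsr : s ≤ r) (hst : s ≤ t) (hrb : r ≤ b) (htb : t ≤ b)
    (hχ : M.chiReal r = 2 * T * M.chiReal s) :
    stepOp (M.F t) (weightE (M.xiSq s).toReal) 0 ≤ ENNReal.ofReal (2 * T) * M.chi s +
      ENNReal.ofReal (2 * η) * stepOp (M.F t) (weightE (M.xiSq r).toReal) 0 := by
  have hT : (1 : ℝ) ≤ T := by exact_mod_cast C.one_le
  have ht := mem_subcritical_of_le hb (hs.trans hst) htb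
  have L := stepLaw_effStep hc₀ hb S ⟨hs, hst.trans htb⟩
  have le_tenth := S.le_tenth
  set Y : ℝ := (1 - 1 / (10 * (T : ℝ)))⁻¹
  have one_le_Y : 1 ≤ Y := (one_le_inv₀ (by linarith)).2 (sub_le_self _ (by positivity))
  have Z_le_Y : (t - s) * M.chiReal s ≤ Y := by
    rw [← mul_one Y, le_inv_mul_iff₀ (by linarith)]
    exact S.sub_mul_chi_le hs hst htb
  have Y_pow : ENNReal.ofReal Y ^ T ≤ 2 := by
    rw [← ENNReal.ofReal_pow (by linarith), ← ENNReal.ofReal_ofNat]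
    exact ENNReal.ofReal_le_ofReal (inv_one_sub_pow_le_two C.one_le)
  have contraction : (stepOp (M.effStep s))^[T] (weightE (M.xiSq s).toReal) ≤
      fun x => ENNReal.ofReal η * weightE (M.xiSq r).toReal x := fun x =>
    (C.iterate_le _ _ L x).trans (mul_le_mul_right (ENNReal.ofReal_le_ofReal
      (weight_mono (mul_pos (by positivity) L.variance_pos)
        (mul_xiSq_le_xiSq C.one_le S hs hsr hrb hχ) x)) _)
  calc stepOp (M.F t) (weightE (M.xiSq s).toReal) 0
    _ ≤ T * ENNReal.ofReal Y ^ T * M.chi s + ENNReal.ofReal Y ^ T *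
          stepOp (M.F t) ((stepOp (M.effStep s))^[T] (weightE (M.xiSq s).toReal)) 0 := by
        refine stepOp_le_add_mul_iterate L.tsum_eq_one (ENNReal.one_le_ofReal.2 one_le_Y)
          (fun x => (F_le_renewal ht hs hst x).trans ?_) (weightE_le_one _) T 0
        gcongr
    _ ≤ T * 2 * M.chi s +
          2 * stepOp (M.F t) (fun x => ENNReal.ofReal η * weightE (M.xiSq r).toReal x) 0 := by
        gcongr
        exact stepOp_mono le_rfl contraction 0
    _ = _ := by
        rw [stepOp_const_mul, ← mul_assoc, ENNReal.ofReal_mul zero_le_two,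
          ENNReal.ofReal_mul zero_le_two, ENNReal.ofReal_ofNat, ENNReal.ofReal_natCast,
          mul_comm (2 : ℝ≥0∞) T]

lemma stepOp_F_le_chi (M : Model d c₀) (t : ℝ) {u : (Fin d → ℤ) → ℝ≥0∞} (hu : u ≤ 1)
    (x : Fin d → ℤ) : stepOp (M.F t) u x ≤ M.chi t := by
  refine (stepOp_mono le_rfl hu x).trans_eq ?_
  simpa only [tsum_F, mul_one] using! congrFun (stepOp_const (M.F t) 1) x

lemma stepOp_weightE_le_of_chiReal_le (hs : s ∈ M.subcritical) (ht : t ∈ M.subcritical) {K : ℝ}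
    (hK : 0 ≤ K) (hχ : M.chiReal t ≤ K * M.chiReal s) (X : ℝ) :
    stepOp (M.F t) (weightE X) 0 ≤ ENNReal.ofReal K * M.chi s := by
  refine (stepOp_F_le_chi M t (weightE_le_one _) 0).trans ?_
  rw [chi_eq_ofReal hs, chi_eq_ofReal ht, ← ENNReal.ofReal_mul hK]
  exact ENNReal.ofReal_le_ofReal hχ

lemma stepOp_weightE_le_of_chi_le_pow (hc₀ : 0 < c₀) (C : Contracts d (kurtosisBound d c₀) T η)
    (hηT : η * T ≤ 1 / 8) (hb : b ∈ M.subcritical)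
    (S : MomentSystem M.chiReal M.secondMomentReal M.fourthMomentReal b (1 / (10 * T)))
    (htb : t ≤ b) (m : ℕ) (hs : 0 ≤ s) (hst : s ≤ t)
    (hχ : M.chiReal t ≤ (2 * T) ^ m * M.chiReal s) :
    stepOp (M.F t) (weightE (M.xiSq s).toReal) 0 ≤ ENNReal.ofReal (4 * T) * M.chi s := by
  have hT : (1 : ℝ) ≤ T := by exact_mod_cast C.one_le
  have ht := mem_subcritical_of_le hb (hs.trans hst) htb
  induction m generalizing s with
  | zero =>
    have hs' := mem_subcritical_of_le hb hs (hst.trans htb)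
    refine stepOp_weightE_le_of_chiReal_le hs' ht (by positivity) ?_ _
    nlinarith [one_le_chiReal hs']
  | succ m ih =>
    have hs' := mem_subcritical_of_le hb hs (hst.trans htb)
    have χs := one_le_chiReal hs'
    rcases le_total (M.chiReal t) (2 * T * M.chiReal s) with close | far
    · exact stepOp_weightE_le_of_chiReal_le hs' ht (by positivity) (by nlinarith) _
    obtain ⟨r, ⟨hsr, hrt⟩, hr⟩ := intermediate_value_Icc hst
      (S.chi_continuousOn.mono (Icc_subset_Icc hs htb)) ⟨by nlinarith, far⟩
    have hr' := mem_subcritical_of_le hb (hs.trans hsr) (hrt.trans htb)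
    have ih_r := ih (hs.trans hsr) hrt (hχ.trans_eq (by rw [hr]; ring))
    calc stepOp (M.F t) (weightE (M.xiSq s).toReal) 0
      _ ≤ ENNReal.ofReal (2 * T) * M.chi s +
            ENNReal.ofReal (2 * η) * (ENNReal.ofReal (4 * T) * M.chi r) :=
          (stepOp_weightE_le_renormalised hc₀ C hb S hs hsr hst (hrt.trans htb) htb hr).trans
            (by gcongr)
      _ ≤ ENNReal.ofReal (4 * T) * M.chi s := by
          have := C.nonneg
          rw [chi_eq_ofReal hs', chi_eq_ofReal hr', hr, ← ENNReal.ofReal_mul (by positivity),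
            ← ENNReal.ofReal_mul (by positivity), ← ENNReal.ofReal_mul (by positivity),
            ← ENNReal.ofReal_mul (by positivity),
            ← ENNReal.ofReal_add (by positivity) (by positivity)]
          refine ENNReal.ofReal_le_ofReal ?_
          nlinarith [mul_le_mul_of_nonneg_right hηT (by positivity : 0 ≤ T * M.chiReal s)]

lemma stepOp_weightE_le (hc₀ : 0 < c₀) (C : Contracts d (kurtosisBound d c₀) T η)
    (hηT : η * T ≤ 1 / 8) (hb : b ∈ M.subcritical)
    (S : MomentSystem M.chiReal M.secondMomentReal M.fourthMomentReal b (1 / (10 * T)))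
    (hs : 0 ≤ s) (hst : s ≤ t) (htb : t ≤ b) :
    stepOp (M.F t) (weightE (M.xiSq s).toReal) 0 ≤ ENNReal.ofReal (4 * T) * M.chi s := by
  have hT : (1 : ℝ) ≤ T := by exact_mod_cast C.one_le
  have χs := one_le_chiReal (mem_subcritical_of_le hb hs (hst.trans htb))
  obtain ⟨m, hm⟩ := pow_unbounded_of_one_lt (M.chiReal t) (by linarith : (1 : ℝ) < 2 * T)
  exact stepOp_weightE_le_of_chi_le_pow hc₀ C hηT hb S htb m hs hst
    (hm.le.trans (le_mul_of_one_le_right (by positivity) χs))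

lemma sqNorm_le_of_supNorm_le_xi (M : Model d c₀) {x : Fin d → ℤ} (hx : supNorm x ≤ M.xi s) :
    sqNorm x ≤ d * (M.xiSq s).toReal := by
  have xi_sq : M.xi s ^ 2 = (M.xiSq s).toReal := Real.sq_sqrt ENNReal.toReal_nonneg
  rw [← xi_sq]
  have := supNorm_nonneg x
  exact (sqNorm_le_mul_supNorm_sq x).trans (by gcongr)

lemma tsum_F_supNorm_le_xi_le (M : Model d c₀) (hX : 0 < (M.xiSq s).toReal) (t : ℝ) :
    ∑' x : {x : Fin d → ℤ // supNorm x ≤ M.xi s}, M.F t x.1 ≤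
      ENNReal.ofReal (1 + d ^ 2) * stepOp (M.F t) (weightE (M.xiSq s).toReal) 0 := by
  rw [stepOp_apply_zero, ← ENNReal.tsum_mul_left]
  refine (ENNReal.tsum_le_tsum fun x => ?_).trans
    (ENNReal.tsum_comp_le_tsum_of_injective Subtype.val_injective _)
  have weight_ge := ENNReal.ofReal_le_ofReal
    (one_le_mul_weight hX (M.sqNorm_le_of_supNorm_le_xi x.2))
  rw [ENNReal.ofReal_one, ENNReal.ofReal_mul (by positivity)] at weight_ge
  rw [mul_left_comm]
  exact le_mul_of_one_le_right' weight_ge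

lemma exists_subcritical_of_lt_betaOf (ht : 0 ≤ t) {δ : ℝ} (h : t < M.betaOf δ) :
    ∃ b, t < b ∧ b ∈ M.subcritical ∧ M.E b < ENNReal.ofReal δ := by
  have nonempty :
      {β : ℝ | 0 ≤ β ∧ ENNReal.ofReal β < M.βc ∧ M.E β < ENNReal.ofReal δ}.Nonempty := by
    by_contra! empty
    rw [betaOf, empty, Real.sSup_empty] at h
    exact h.not_ge ht
  obtain ⟨b, ⟨hb, hbc, hE⟩, htb⟩ := exists_lt_of_lt_csSup nonempty h
  exact ⟨b, htb, ⟨hb, hbc⟩, hE⟩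

end Stability

end Model

end Blackbox

/-- stability of the finite-volume susceptibility
(`Prop:Stability section 2`). -/
theorem statement12 (d : ℕ) (hd : 2 < d) (c₀ : ℝ) (hc₀ : c₀ ∈ Set.Ioc (0:ℝ) 1) :
    ∃ δstab : ℝ, δstab ∈ Set.Ioc (0:ℝ) (1/10) ∧ ∃ Cstab > (0:ℝ),
      ∀ M : Model d c₀, ∀ β β' : ℝ, 0 ≤ β' → β' ≤ β → β < M.betaOf δstab →
        (∑' x : {x : Fin d → ℤ // supNorm x ≤ M.xi β'}, M.F β x.1) ≤
            ENNReal.ofReal Cstab * M.chi β' ∧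
        (∑' x : {x : Fin d → ℤ // supNorm x ≤ M.xi β'}, M.effStep β x.1) ≤
            ENNReal.ofReal Cstab * (M.chi β' / M.chi β) := by
  obtain ⟨T, η, C, hηT⟩ := exists_contracts hd
    (by linarith [ten_lt_kurtosisBound d c₀] : 1 ≤ kurtosisBound d c₀)
  have hT : (1 : ℝ) ≤ T := by exact_mod_cast C.one_le
  have δ_pos : 0 < 1 / (10 * (T : ℝ)) := by positivity
  have δ_le : 1 / (10 * (T : ℝ)) ≤ 1 / 10 := one_div_le_one_div_of_le (by norm_num) (by linarith)
  refine ⟨1 / (10 * T), ⟨δ_pos, δ_le⟩, (1 + d ^ 2) * (4 * T), by positivity,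
    fun M β β' h0 hβ' hβ => ?_⟩
  obtain ⟨b, hβb, hb, hE⟩ := Model.exists_subcritical_of_lt_betaOf (h0.trans hβ') hβ
  have S := M.momentSystem hc₀.1 δ_pos δ_le hb hE
  have hX := Model.toReal_xiSq_pos hc₀.1 (Model.mem_subcritical_of_le hb h0 (hβ'.trans hβb.le))
  have ball_le : ∑' x : {x : Fin d → ℤ // supNorm x ≤ M.xi β'}, M.F β x.1 ≤
      ENNReal.ofReal ((1 + d ^ 2) * (4 * T)) * M.chi β' := by
    rw [ENNReal.ofReal_mul (by positivity), mul_assoc]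
    exact (M.tsum_F_supNorm_le_xi_le hX β).trans
      (mul_le_mul_right (Model.stepOp_weightE_le hc₀.1 C hηT hb S h0 hβ' hβb.le) _)
  refine ⟨ball_le, ?_⟩
  simp only [Model.effStep, div_eq_mul_inv, ENNReal.tsum_mul_right]
  exact (mul_le_mul_left ball_le _).trans_eq (mul_assoc _ _ _)
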